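/- Let $K$ be an algebraically closed field and let $\Gamma$ be a Brauer tree of multiplicity one, i.e. a finite tree with a cyclic ordering of the edges at each vertex. Its quiver $Q$ has the edges of $\Gamma$ as vertices and, for every vertex $x$ of $\Gamma$ and every edge $i$ at $x$, an arrow from $i$ to the edge that follows $i$ in the cyclic order at $x$ (a loop if $x$ is a leaf); the arrows belonging to $x$ form an oriented cycle, called the $A$-cycle of $x$, and each vertex of $Q$ lies on exactly two $A$-cycles. Let $A=KQ/I$ be the basic Brauer tree algebra, where $ab$ denotes the path $a$ followed by $b$ and $I$ is generated by the products of consecutive arrows from different $A$-cycles and by the differences of the two full $A$-cycles starting at the same vertex of $Q$. Modules are left modules, and $e_i$ is the idempotent of the vertex $i$. Let $T$ be an indecomposable two-term partial tilting complex $P_0\xrightarrow{f}P_1$ over $A$ in degrees $0$ and $1$ (that is, a complex of finitely generated projective modules, indecomposable in $D^b(A)$, with $\operatorname{Hom}_{D^b(A)}(T,T[n])=0$ for all $n\ne 0$) that is the minimal projective presentation of an indecomposable non-projective module which is not isomorphic to $P/\operatorname{soc}(P)$ for any indecomposable projective module $P$. Write $P_0=\bigoplus_{i\in I}Ae_i$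 and $P_1=\bigoplus_{j\in J}Ae_j$ with sets $I,J$ of vertices of $Q$. The diagram of $T$ is the subgraph of $Q$ that consists of the vertices in $I\cup J$ and, for all $i\in I$, $j\in J$ such that $f$ has a nonzero component $Ae_i\to Ae_j$, of the vertices and arrows of the directed path from $i$ to $j$ along their common $A$-cycle (shorter than the full cycle). The elements of $I\cup J$ are the marked vertices of $T$, those of $I$ its sources and those of $J$ its sinks; a source or sink has degree one if exactly one arrow of the diagram starts or ends at it. Let $T_i$ and $T_j$ be two such complexes, and suppose that their diagrams have exactly one vertex $k$ in common. Then $$\operatorname{Hom}_{D^b(A)}(T_i,T_j[-1])=0=\operatorname{Hom}_{D^b(A)}(T_j,T_i[-1])$$ holds if and only if one of the following is true: $k$ is neither a marked vertex of $T_i$ nor a marked vertex of $T_j$; or $k$ is a degree-one sink of both $T_i$ and $T_j$; or $k$ is a degree-one source of both $T_i$ and $T_j$. -/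

import Mathlib

open CategoryTheory CategoryTheory.Limits

universe w u v

/-- A Brauer tree (of multiplicity one): a tree `graph` together with a cyclic ordering of the
edges at every vertex. A half-edge (an edge together with one of its two end points) is a dart `d`;
its end point is `d.fst` and its edge is `d.edge`. The permutation `next` sends the half-edge at
`v` of an edge to the half-edge at `v` of the edge that follows it in the cyclic order at `v`. -/
structure BrauerTree (V : Type v) where
  graph : SimpleGraph V
  isTree : graph.IsTree
  next : Equiv.Perm graph.Dart
  isCycleOn : ∀ x : V, next.IsCycleOn {d | d.fst = x}

namespace BrauerTree

variable {V : Type v} (B : BrauerTree V)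

/-- The vertices of the Brauer quiver: the edges of the tree. -/
abbrev Edge : Type v := B.graph.edgeSet

/-- The arrows of the Brauer quiver: every half-edge `d` gives an arrow, from its edge to the next
edge around `d.fst` (a loop if `d.fst` is a leaf). The arrows with a given `d.fst` are an `A`-cycle;
they form one orbit of `next`. -/
abbrev Arrow : Type v := B.graph.Dart

/-- The source of an arrow. -/
def src (d : B.Arrow) : B.Edge := ⟨d.edge, d.edge_mem⟩

/-- The target of an arrow. -/
def tgt (d : B.Arrow) : B.Edge := B.src (B.next d)

/-- The number of arrows of the cycle that contains `d`. -/
noncomputable def cycleLength (d : B.Arrow) : ℕ := Function.minimalPeriod B.next d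

section Algebra

variable (K : Type u) [Field K]

/-- The generator of the path algebra given by the trivial path at a vertex of the quiver. -/
noncomputable def genVertex (i : B.Edge) : FreeAlgebra K (B.Edge ⊕ B.Arrow) :=
  FreeAlgebra.ι K (Sum.inl i)

/-- The generator of the path algebra given by an arrow. -/
noncomputable def genArrow (d : B.Arrow) : FreeAlgebra K (B.Edge ⊕ B.Arrow) :=
  FreeAlgebra.ι K (Sum.inr d)

/-- The product of the `m` consecutive arrows of one cycle that start with `d`. -/
noncomputable def genPath (d : B.Arrow) (m : ℕ) : FreeAlgebra K (B.Edge ⊕ B.Arrow) :=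
  ((List.range m).map fun l => B.genArrow K ((B.next ^ l) d)).prod

/-- The first five relations present the path algebra of the Brauer quiver, in which `a * b` is
the path `a` followed by `b`; the last two generate the ideal of relations of the Brauer tree
algebra with multiplicity one. -/
inductive Rel : FreeAlgebra K (B.Edge ⊕ B.Arrow) → FreeAlgebra K (B.Edge ⊕ B.Arrow) → Prop
  | vertex_mul_self (i : B.Edge) : Rel (B.genVertex K i * B.genVertex K i) (B.genVertex K i)
  | vertex_mul_vertex (i j : B.Edge) (h : i ≠ j) : Rel (B.genVertex K i * B.genVertex K j) 0
  | sum_vertex : Rel (∑ᶠ i : B.Edge, B.genVertex K i) 1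
  | src_mul (d : B.Arrow) : Rel (B.genVertex K (B.src d) * B.genArrow K d) (B.genArrow K d)
  | mul_tgt (d : B.Arrow) : Rel (B.genArrow K d * B.genVertex K (B.tgt d)) (B.genArrow K d)
  /-- Consecutive arrows of different cycles have product zero. -/
  | arrow_mul_arrow (d d' : B.Arrow) (h : d.fst ≠ d'.fst) :
      Rel (B.genArrow K d * B.genArrow K d') 0
  /-- The two full cycles that start at a given vertex of the quiver are equal. -/
  | cycle_eq (d : B.Arrow) :
      Rel (B.genPath K d (B.cycleLength d)) (B.genPath K d.symm (B.cycleLength d.symm))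

/-- The basic Brauer tree algebra of `B`, with multiplicity one. -/
def Alg : Type (max u v) := RingQuot (Rel B K)

noncomputable instance : Ring (B.Alg K) := inferInstanceAs (Ring (RingQuot (Rel B K)))

noncomputable instance : Algebra K (B.Alg K) := inferInstanceAs (Algebra K (RingQuot (Rel B K)))

/-- The primitive idempotent `e_i`. -/
noncomputable def idem (i : B.Edge) : B.Alg K := RingQuot.mkAlgHom K (Rel B K) (B.genVertex K i)

/-- The indecomposable projective left module `A e_i`. -/
noncomputable def proj (i : B.Edge) : Submodule (B.Alg K) (B.Alg K) :=
  Submodule.span (B.Alg K) {B.idem K i}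

end Algebra

end BrauerTree

/-- The socle of a module: the sum of its simple submodules. -/
def moduleSocle (R : Type*) [Ring R] (M : Type*) [AddCommGroup M] [Module R M] : Submodule R M :=
  sSup {S | IsAtom S}

/-- A submodule `N` is superfluous if `N + L = M` only for `L = M`. -/
def IsSuperfluous {R : Type*} [Ring R] {M : Type*} [AddCommGroup M] [Module R M]
    (N : Submodule R M) : Prop :=
  ∀ L : Submodule R M, N ⊔ L = ⊤ → L = ⊤

section Complexes

variable {A : Type u} [Ring A]

/-- `Hom_{D(A)}(S, T[n]) = 0`. The bounded derived category of finitely generated modules is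
a full subcategory of the derived category of all modules. -/
def HomVanishes [HasDerivedCategory.{w} (ModuleCat.{u} A)]
    (S T : CochainComplex (ModuleCat.{u} A) ℤ) (n : ℤ) : Prop :=
  ∀ g : DerivedCategory.Q.obj S ⟶ (DerivedCategory.Q.obj T)⟦n⟧, g = 0

/-- `T` is an indecomposable two-term partial tilting complex, concentrated in degrees
`0` and `1`. -/
structure IsIndecTwoTermPartialTilting [HasDerivedCategory.{w} (ModuleCat.{u} A)]
    (T : CochainComplex (ModuleCat.{u} A) ℤ) : Prop where
  isZero : ∀ n : ℤ, n ≠ 0 → n ≠ 1 → IsZero (T.X n)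
  finite : ∀ n : ℤ, Module.Finite A (T.X n)
  projective : ∀ n : ℤ, Module.Projective A (T.X n)
  homVanishes : ∀ n : ℤ, n ≠ 0 → HomVanishes T T n
  indecomposable : Indecomposable (DerivedCategory.Q.obj T)

/-- The terms `T^0 → T^1` of the complex are the minimal projective presentation of an
indecomposable non-projective module `M` that is not isomorphic to `P / soc P` for any
indecomposable projective `P`. (That `T^0` and `T^1` are projective is part of
`IsIndecTwoTermPartialTilting`.) -/
def IsPresentation (T : CochainComplex (ModuleCat.{u} A) ℤ) : Prop :=
  ∃ (M : ModuleCat.{u} A) (p : T.X 1 →ₗ[A] M),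
    Indecomposable M ∧ ¬ Module.Projective A M ∧
    (∀ P : ModuleCat.{u} A, Indecomposable P → Module.Projective A P →
      IsEmpty (M ≃ₗ[A] P ⧸ moduleSocle A P)) ∧
    Function.Surjective p ∧ LinearMap.ker p = LinearMap.range (T.d 0 1).hom ∧
    IsSuperfluous (LinearMap.ker p) ∧ IsSuperfluous (LinearMap.ker (T.d 0 1).hom)

end Complexes

/-- Decompositions `T^0 = ⨁_{i ∈ I} A e_i` and `T^1 = ⨁_{j ∈ J} A e_j` of the two terms of a complex
over a Brauer tree algebra, from which its diagram is read off. -/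
structure TermDecomposition {V : Type v} (B : BrauerTree V) (K : Type u) [Field K]
    (T : CochainComplex (ModuleCat.{max u v} (B.Alg K)) ℤ) where
  I : Finset B.Edge
  J : Finset B.Edge
  equiv₀ : T.X 0 ≃ₗ[B.Alg K] (∀ i : I, B.proj K i.1)
  equiv₁ : T.X 1 ≃ₗ[B.Alg K] (∀ j : J, B.proj K j.1)

namespace TermDecomposition

variable {V : Type v} {B : BrauerTree V} {K : Type u} [Field K]
  {T : CochainComplex (ModuleCat.{max u v} (B.Alg K)) ℤ} (D : TermDecomposition B K T)

open Classical in
/-- The component `A e_i → A e_j` of the differential. -/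
noncomputable def component (i : D.I) (j : D.J) : B.proj K i.1 →ₗ[B.Alg K] B.proj K j.1 :=
  LinearMap.proj j ∘ₗ D.equiv₁.toLinearMap ∘ₗ (T.d 0 1).hom ∘ₗ D.equiv₀.symm.toLinearMap ∘ₗ
    LinearMap.single (B.Alg K) (fun i : D.I => B.proj K i.1) i

/-- The arrows of the diagram: those on the directed path `d, next d, …, next^(m-1) d` from `i`
to `j` along a cycle, where the differential has a nonzero component `A e_i → A e_j`. -/
def arrows : Set B.Arrow :=
  {a | ∃ (i : D.I) (j : D.J), D.component i j ≠ 0 ∧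
    ∃ (d : B.Arrow) (m : ℕ), B.src d = i.1 ∧ B.src ((B.next ^ m) d) = j.1 ∧
      m < B.cycleLength d ∧ ∃ l < m, a = (B.next ^ l) d}

/-- `x` is a marked vertex of the diagram. -/
def IsMarked (x : B.Edge) : Prop := x ∈ D.I ∨ x ∈ D.J

/-- The vertices of the diagram. -/
def vertices : Set B.Edge :=
  {x | D.IsMarked x ∨ ∃ a ∈ D.arrows, B.src a = x ∨ B.tgt a = x}

/-- The number of arrows of the diagram that start or end at `x`. -/
noncomputable def degree (x : B.Edge) : ℕ :=
  {a | a ∈ D.arrows ∧ (B.src a = x ∨ B.tgt a = x)}.ncard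

/-- `x` is a source of the diagram and an end point of it. -/
def IsDegreeOneSource (x : B.Edge) : Prop := x ∈ D.I ∧ D.degree x = 1

/-- `x` is a sink of the diagram and an end point of it. -/
def IsDegreeOneSink (x : B.Edge) : Prop := x ∈ D.J ∧ D.degree x = 1

end TermDecomposition

/-!
A morphism `S ⟶ T[-1]` in the derived category between complexes of projective modules in degrees
`0` and `1` is a map `g : S^1 → T^0` killed by both differentials. Such maps are matrices with
entries in `e_i A e_j`, and the differentials become matrices `F` whose entries are multiples of the
path from `i` to `j` along their common cycle. Since the complex has no self-extensions and no
nontrivial idempotent endomorphisms, every cycle carries at most one source and one sink, these are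
linked by `F`, and everything marked is connected; hence the diagram is a walk in the tree. Removing
the edge `k` splits the tree into two branches. If `k` is unmarked, or a common sink or source of
degree one, then the diagrams lie in opposite branches at `k`, and `g` has no room to be nonzero.
Otherwise a path between `k` and a marked vertex on a cycle of `k`, or the socle at `k`, is such a
map.
-/

/-! ### Morphisms in the derived category -/

section DerivedHom

open CochainComplex CochainComplex.HomComplex DerivedCategory Localization

section Cochain

variable {C : Type u} [Category.{v} C] [Preadditive C] {S T : CochainComplex C ℤ}
  [S.IsStrictlyLE 1] [T.IsStrictlyGE 0]

theorem cochain_neg_two_eq_zero (c : Cochain S T (-2)) : c = 0 := by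
  ext p q hpq : 1
  by_cases hp : p < 2
  · exact (T.isZero_of_isStrictlyGE 0 q).eq_of_tgt _ _
  · exact (S.isZero_of_isStrictlyLE 1 p).eq_of_src _ _

theorem cochain_neg_one_eq_zero_iff (c : Cochain S T (-1)) :
    c = 0 ↔ c.v 1 0 (by norm_num) = 0 := by
  refine ⟨fun h => by rw [h, Cochain.zero_v], fun h => ?_⟩
  ext p q hpq : 1
  rcases lt_trichotomy p 1 with hp | rfl | hp
  · exact (T.isZero_of_isStrictlyGE 0 q).eq_of_tgt _ _
  · obtain rfl : q = 0 := by lia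
    exact h
  · exact (S.isZero_of_isStrictlyLE 1 p).eq_of_src _ _

theorem mem_coboundaries_neg_one_iff (z : Cocycle S T (-1)) :
    z ∈ coboundaries S T (-1) ↔ z = 0 := by
  rw [mem_coboundaries_iff z (-2) (by norm_num)]
  constructor
  · rintro ⟨c, hc⟩
    rw [cochain_neg_two_eq_zero c, δ_zero] at hc
    exact Subtype.ext hc.symm
  · rintro rfl
    exact ⟨0, δ_zero _ _⟩

theorem δ_neg_one_eq_zero_iff (c : Cochain S T (-1)) :
    δ (-1) 0 c = 0 ↔
      S.d 0 1 ≫ c.v 1 0 (by norm_num) = 0 ∧ c.v 1 0 (by norm_num) ≫ T.d 0 1 = 0 := by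
  have h₀ : (δ (-1) 0 c).v 0 0 (by norm_num) = S.d 0 1 ≫ c.v 1 0 (by norm_num) := by
    rw [δ_v (-1) 0 (by norm_num) c 0 0 (by norm_num) (-1) 1 (by norm_num) (by norm_num),
      (T.isZero_of_isStrictlyGE 0 (-1)).eq_of_tgt (c.v 0 (-1) (by norm_num)) 0]
    simp
  have h₁ : (δ (-1) 0 c).v 1 1 (by norm_num) = c.v 1 0 (by norm_num) ≫ T.d 0 1 := by
    rw [δ_v (-1) 0 (by norm_num) c 1 1 (by norm_num) 0 2 (by norm_num) (by norm_num),
      (S.isZero_of_isStrictlyLE 1 2).eq_of_tgt (S.d 1 2) 0]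
    simp
  rw [← h₀, ← h₁]
  refine ⟨fun h => by simp [h], fun ⟨h₀, h₁⟩ => ?_⟩
  ext p : 1
  rcases lt_or_ge p 0 with hp | hp
  · exact (T.isZero_of_isStrictlyGE 0 p).eq_of_tgt _ _
  rcases lt_or_ge 1 p with hp' | hp'
  · exact (S.isZero_of_isStrictlyLE 1 p).eq_of_src _ _
  obtain rfl | rfl : p = 0 ∨ p = 1 := by lia
  exacts [h₀, h₁]

end Cochain

variable {A : Type u} [Ring A] [HasDerivedCategory.{w} (ModuleCat.{u} A)]

theorem homVanishes_iff_mem_coboundaries (S T : CochainComplex (ModuleCat.{u} A) ℤ)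
    [S.IsKProjective] (n : ℤ) :
    HomVanishes S T n ↔ ∀ z : Cocycle S T n, z ∈ coboundaries S T n := by
  have : HasSmallLocalizedShiftedHom.{w} (HomologicalComplex.quasiIso (ModuleCat.{u} A) (.up ℤ))
      ℤ S T := by
    simp only [hasSmallLocalizedShiftedHom_iff _ _ Q]
    infer_instance
  let e : CohomologyClass S T n ≃ (Q.obj S ⟶ (Q.obj T)⟦n⟧) :=
    CohomologyClass.equivOfIsKProjective.{w}.trans (SmallShiftedHom.equiv _ Q)
  have : HomVanishes S T n ↔ Subsingleton (CohomologyClass S T n) := by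
    rw [e.subsingleton_congr]
    exact (subsingleton_iff_forall_eq 0).symm
  rw [this, subsingleton_iff_forall_eq 0, CohomologyClass.mk_surjective.forall]
  simp only [CohomologyClass.mk_eq_zero_iff]

theorem homVanishes_neg_one_iff {S T : CochainComplex (ModuleCat.{u} A) ℤ} [S.IsKProjective]
    [S.IsStrictlyLE 1] [T.IsStrictlyGE 0] :
    HomVanishes S T (-1) ↔ ∀ g : S.X 1 →ₗ[A] T.X 0,
      g ∘ₗ (S.d 0 1).hom = 0 → (T.d 0 1).hom ∘ₗ g = 0 → g = 0 := by
  simp only [homVanishes_iff_mem_coboundaries, mem_coboundaries_neg_one_iff]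
  constructor
  · intro h g hS hT
    let c : Cochain S T (-1) := Cochain.single (ModuleCat.ofHom g) (-1)
    have hc : c.v 1 0 (by norm_num) = ModuleCat.ofHom g := Cochain.single_v _ _ _
    have hδ : δ (-1) 0 c = 0 := (δ_neg_one_eq_zero_iff c).2
      ⟨hc ▸ ModuleCat.hom_ext hS, hc ▸ ModuleCat.hom_ext hT⟩
    have hc₀ : c = 0 := congrArg Subtype.val (h (Cocycle.mk c 0 (by norm_num) hδ))
    exact congrArg ModuleCat.Hom.hom (hc.symm.trans ((cochain_neg_one_eq_zero_iff c).1 hc₀))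
  · intro h z
    obtain ⟨hS, hT⟩ := (δ_neg_one_eq_zero_iff z.1).1 (z.δ_eq_zero 0)
    refine Subtype.ext ((cochain_neg_one_eq_zero_iff z.1).2 (ModuleCat.hom_ext ?_))
    exact h _ (congrArg ModuleCat.Hom.hom hS) (congrArg ModuleCat.Hom.hom hT)

namespace IsIndecTwoTermPartialTilting

variable {T : CochainComplex (ModuleCat.{u} A) ℤ} (hT : IsIndecTwoTermPartialTilting T)

include hT

theorem isStrictlyGE : T.IsStrictlyGE 0 := by
  rw [CochainComplex.isStrictlyGE_iff]
  exact fun i hi => hT.isZero i (by lia) (by lia)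

theorem isStrictlyLE : T.IsStrictlyLE 1 := by
  rw [CochainComplex.isStrictlyLE_iff]
  exact fun i hi => hT.isZero i (by lia) (by lia)

theorem isKProjective : T.IsKProjective := by
  have := hT.isStrictlyLE
  have : ∀ n, Projective (T.X n) := fun n =>
    (IsProjective.iff_projective (T.X n)).1 (hT.projective n)
  exact CochainComplex.isKProjective_of_projective T 1

end IsIndecTwoTermPartialTilting

end DerivedHom

/-! ### Cycles and branches of the tree -/

namespace BrauerTree

variable {V : Type v} (B : BrauerTree V)

theorem next_fst (d : B.Arrow) : (B.next d).fst = d.fst :=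
  (B.isCycleOn d.fst).1.mapsTo rfl

theorem next_pow_fst (d : B.Arrow) (m : ℕ) : ((B.next ^ m) d).fst = d.fst := by
  induction m with
  | zero => rfl
  | succ m ih => rw [pow_succ', Equiv.Perm.mul_apply, next_fst, ih]

theorem next_symm_fst (d : B.Arrow) : (B.next.symm d).fst = d.fst := by
  rw [← B.next_fst, Equiv.apply_symm_apply]

theorem src_symm (d : B.Arrow) : B.src d.symm = B.src d :=
  Subtype.ext (SimpleGraph.Dart.edge_symm d)

theorem exists_src_eq (e : B.Edge) : ∃ d : B.Arrow, B.src d = e := by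
  obtain ⟨e, he⟩ := e
  induction e using Sym2.ind with
  | _ x y => exact ⟨⟨(x, y), he⟩, rfl⟩

theorem src_eq_iff {d d' : B.Arrow} : B.src d = B.src d' ↔ d = d' ∨ d = d'.symm := by
  rw [← SimpleGraph.dart_edge_eq_iff]
  exact Subtype.ext_iff

theorem eq_of_src_eq_of_fst_eq {d d' : B.Arrow} (h : B.src d = B.src d') (hf : d.fst = d'.fst) :
    d = d' := by
  rcases B.src_eq_iff.1 h with h | h
  · exact h
  · exact absurd (h ▸ hf : d'.symm.fst = d'.fst) d'.snd_ne_fst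

theorem fst_symm_ne (d : B.Arrow) : d.symm.fst ≠ d.fst := d.snd_ne_fst

theorem eq_and_eq_of_src_eq {a a' b b' : B.Arrow} (ha : B.src a = B.src a')
    (hb : B.src b = B.src b') (hab : B.src a ≠ B.src b) (h : a.fst = b.fst)
    (h' : a'.fst = b'.fst) : a = a' ∧ b = b' := by
  rcases B.src_eq_iff.1 ha with rfl | rfl
  · exact ⟨rfl, B.eq_of_src_eq_of_fst_eq hb (h.symm.trans h')⟩
  · rcases B.src_eq_iff.1 hb with rfl | rfl
    · exact absurd (h.trans h'.symm) a'.snd_ne_fst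
    · have hab' : a' = b' := SimpleGraph.Dart.ext _ _ (Prod.ext h' h)
      exact absurd (by rw [hab']) hab

theorem next_pow_cycleLength (d : B.Arrow) : (B.next ^ B.cycleLength d) d = d := by
  rw [Equiv.Perm.coe_pow]; exact Function.iterate_minimalPeriod

theorem next_pow_mod (d : B.Arrow) (m : ℕ) :
    (B.next ^ (m % B.cycleLength d)) d = (B.next ^ m) d := by
  rw [Equiv.Perm.coe_pow, Equiv.Perm.coe_pow]
  exact Function.iterate_mod_minimalPeriod_eq

theorem eq_of_next_pow_eq (d : B.Arrow) {m n : ℕ} (hm : m < B.cycleLength d)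
    (hn : n < B.cycleLength d) (h : (B.next ^ m) d = (B.next ^ n) d) : m = n := by
  rw [Equiv.Perm.coe_pow, Equiv.Perm.coe_pow] at h
  exact Function.iterate_injOn_Iio_minimalPeriod hm hn h

section Finite

variable [Finite V]

instance : Finite B.Arrow :=
  Finite.of_injective (fun d : B.Arrow => d.toProd) fun _ _ => SimpleGraph.Dart.ext _ _

theorem cycleLength_pos (d : B.Arrow) : 0 < B.cycleLength d :=
  Function.minimalPeriod_pos_of_mem_periodicPts (B.next.injective.mem_periodicPts d)

theorem exists_next_pow_eq {d d' : B.Arrow} (h : d.fst = d'.fst) :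
    ∃ m < B.cycleLength d, (B.next ^ m) d = d' := by
  obtain ⟨n, hn⟩ := (B.isCycleOn d.fst).exists_pow_eq' (Set.toFinite _) rfl h.symm
  refine ⟨n % B.cycleLength d, Nat.mod_lt _ (B.cycleLength_pos d), ?_⟩
  rw [next_pow_mod, hn]

theorem cycleLength_next_pow (d : B.Arrow) (m : ℕ) :
    B.cycleLength ((B.next ^ m) d) = B.cycleLength d := by
  rw [Equiv.Perm.coe_pow]
  exact Function.minimalPeriod_apply_iterate (B.next.injective.mem_periodicPts d) m

theorem cycleLength_eq {d d' : B.Arrow} (h : d.fst = d'.fst) :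
    B.cycleLength d = B.cycleLength d' := by
  obtain ⟨m, -, rfl⟩ := B.exists_next_pow_eq h
  rw [cycleLength_next_pow]

end Finite

/-- The branch of the tree that hangs off `d.fst` by the edge of `d`: that edge together with all
edges on the side of its other end point `d.snd`. -/
def branch (d : B.Arrow) : Set B.Edge :=
  {e | e = B.src d ∨ ∃ z ∈ e.1, (B.graph.deleteEdges {d.edge}).Reachable d.snd z}

theorem src_mem_branch (d : B.Arrow) : B.src d ∈ B.branch d := Or.inl rfl

theorem not_reachable_delete (d : B.Arrow) :
    ¬ (B.graph.deleteEdges {d.edge}).Reachable d.snd d.fst := by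
  have hbridge := SimpleGraph.isAcyclic_iff_forall_isBridge.1 B.isTree.isAcyclic d.edge_mem
  exact fun hr => hbridge hr.symm

theorem reachable_of_mem_edge {d : B.Arrow} {e : B.Edge} (he : e ≠ B.src d) {z z' : V}
    (hz : z ∈ e.1) (hz' : z' ∈ e.1) : (B.graph.deleteEdges {d.edge}).Reachable z z' := by
  rcases eq_or_ne z z' with rfl | hne
  · rfl
  have hzz' : e.1 = s(z, z') := (Sym2.mem_and_mem_iff hne).1 ⟨hz, hz'⟩
  refine SimpleGraph.Adj.reachable (SimpleGraph.deleteEdges_adj.2 ⟨?_, ?_⟩)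
  · rw [← SimpleGraph.mem_edgeSet, ← hzz']
    exact e.2
  · rw [← hzz']
    exact fun h => he (Subtype.ext h)

theorem reachable_of_mem_branch {d : B.Arrow} {e : B.Edge} (h : e ∈ B.branch d)
    (he : e ≠ B.src d) {z : V} (hz : z ∈ e.1) :
    (B.graph.deleteEdges {d.edge}).Reachable d.snd z := by
  rcases h with h | ⟨z', hz', h⟩
  · exact absurd h he
  · exact h.trans (B.reachable_of_mem_edge he hz' hz)

theorem eq_of_mem_branch_of_fst_mem {d : B.Arrow} {e : B.Edge} (h : e ∈ B.branch d)
    (he : d.fst ∈ e.1) : e = B.src d := by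
  by_contra hne
  exact B.not_reachable_delete d (B.reachable_of_mem_branch h hne he)

theorem mem_src_iff {d : B.Arrow} {z : V} : z ∈ (B.src d).1 ↔ z = d.fst ∨ z = d.snd :=
  Sym2.mem_iff

theorem fst_mem_src (d : B.Arrow) : d.fst ∈ (B.src d).1 := B.mem_src_iff.2 (Or.inl rfl)

theorem eq_fst_of_mem_branch {d : B.Arrow} {e e' : B.Edge} (h : e ∈ B.branch d)
    (h' : e' ∉ B.branch d) {z : V} (hz : z ∈ e.1) (hz' : z ∈ e'.1) : z = d.fst := by
  by_cases he : e = B.src d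
  · subst he
    rcases B.mem_src_iff.1 hz with h1 | h1
    · exact h1
    · exact absurd (Or.inr ⟨z, hz', by rw [h1]⟩) h'
  · exact absurd (Or.inr ⟨z, hz', B.reachable_of_mem_branch h he hz⟩) h'

theorem eq_of_src_mem_branch {a d : B.Arrow} (h : d.fst = a.fst) (hd : B.src d ∈ B.branch a) :
    d = a :=
  B.eq_of_src_eq_of_fst_eq (B.eq_of_mem_branch_of_fst_mem hd (h ▸ B.fst_mem_src d)) h

theorem eq_of_src_mem_branch_of_src_notMem {a d d' : B.Arrow} (h : d.fst = d'.fst)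
    (hd : B.src d ∈ B.branch a) (hd' : B.src d' ∉ B.branch a) : d = a :=
  B.eq_of_src_mem_branch
    (B.eq_fst_of_mem_branch hd hd' (B.fst_mem_src d) (h ▸ B.fst_mem_src d')) hd

theorem fst_eq_of_src_mem_branch_union {p q d d' : B.Arrow} (hpq : p.fst = q.fst)
    (h : d.fst = d'.fst) (hd : B.src d ∈ B.branch p ∪ B.branch q)
    (hd' : B.src d' ∉ B.branch p ∪ B.branch q) : d.fst = p.fst := by
  rcases hd with hd | hd
  · rw [B.eq_of_src_mem_branch_of_src_notMem h hd fun h => hd' (Or.inl h)]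
  · rw [B.eq_of_src_mem_branch_of_src_notMem h hd fun h => hd' (Or.inr h), hpq]

theorem mem_branch_of_snd_mem {d : B.Arrow} {e : B.Edge} (h : d.snd ∈ e.1) : e ∈ B.branch d :=
  Or.inr ⟨_, h, SimpleGraph.Reachable.refl _⟩

theorem eq_of_mem_branch_of_mem_branch_symm {d : B.Arrow} {e : B.Edge} (h : e ∈ B.branch d)
    (h' : e ∈ B.branch d.symm) : e = B.src d := by
  by_contra he
  obtain ⟨d', rfl⟩ := B.exists_src_eq e
  have hz := B.fst_mem_src d'
  have h1 := B.reachable_of_mem_branch h he hz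
  have h2 := B.reachable_of_mem_branch h' (by rwa [B.src_symm]) hz
  rw [SimpleGraph.Dart.edge_symm] at h2
  exact B.not_reachable_delete d (h1.trans h2.symm)

end BrauerTree

/-! ### The action of the Brauer tree algebra on its standard basis -/

namespace BrauerTree

variable {V : Type v} (B : BrauerTree V) (K : Type u) [Field K]

/-- The standard basis of the Brauer tree algebra: trivial paths, proper paths along a cycle, and
full cycles. The path `mid d m` has length `m + 1` and starts with `d`; it is meant to be used for
`m + 1 < B.cycleLength d` only. The full cycle `soc i` spans the socle of the projective at `i`. -/
inductive BasisPath
  | start (i : B.Edge)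
  | mid (d : B.Arrow) (m : ℕ)
  | soc (i : B.Edge)

namespace BasisPath

variable {B}

/-- The vertex of the quiver at which a basis path ends. -/
def target : BasisPath B → B.Edge
  | start i => i
  | mid d m => B.src ((B.next ^ (m + 1)) d)
  | soc i => i

variable (B)

open Classical in
/-- The path of length `n + 1` starting with `d`, or `none` if it vanishes. -/
noncomputable def ofPath (d : B.Arrow) (n : ℕ) : Option (BasisPath B) :=
  if n + 1 < B.cycleLength d then some (mid d n)
  else if n + 1 = B.cycleLength d then some (soc (B.src d)) else none

open Classical in
/-- Right multiplication by an arrow on the standard basis, `none` standing for zero. -/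
noncomputable def mulArrow (a : B.Arrow) : BasisPath B → Option (BasisPath B)
  | start i => if B.src a = i then ofPath B a 0 else none
  | mid d m => if a = (B.next ^ (m + 1)) d then ofPath B d (m + 1) else none
  | soc _ => none

open Classical in
/-- Right multiplication by a trivial path on the standard basis, `none` standing for zero. -/
noncomputable def mulVertex (j : B.Edge) (x : BasisPath B) : Option (BasisPath B) :=
  if x.target = j then some x else none

/-- Right multiplication by the path of length `m` along a cycle that starts with `d`. -/
noncomputable def mulPath (d : B.Arrow) : ℕ → BasisPath B → Option (BasisPath B)
  | 0, x => some x
  | m + 1, x => (mulPath d m x).bind (mulArrow B ((B.next ^ m) d))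

variable {B}

theorem target_eq_of_ofPath_eq_some {d : B.Arrow} {n : ℕ} {x : BasisPath B}
    (h : ofPath B d n = some x) :
    x.target = B.src ((B.next ^ (n + 1)) d) := by
  unfold ofPath at h
  split_ifs at h with h1 h2
  · cases h; rfl
  · cases h
    rw [h2, B.next_pow_cycleLength]; rfl

theorem target_eq_of_mulArrow_eq_some {a : B.Arrow} {x y : BasisPath B}
    (h : mulArrow B a x = some y) :
    y.target = B.tgt a := by
  cases x with
  | start i =>
    simp only [mulArrow] at h
    split_ifs at h
    rw [target_eq_of_ofPath_eq_some h, zero_add, pow_one]; rfl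
  | mid d m =>
    simp only [mulArrow] at h
    split_ifs at h with h1
    rw [target_eq_of_ofPath_eq_some h, h1, pow_succ']; rfl
  | soc i => simp [mulArrow] at h

theorem target_eq_of_mulArrow_ne_none {a : B.Arrow} {x : BasisPath B} (h : mulArrow B a x ≠ none) :
    x.target = B.src a := by
  cases x with
  | start i =>
    simp only [mulArrow] at h
    split_ifs at h with h1
    · exact h1.symm
    · simp at h
  | mid d m =>
    simp only [mulArrow] at h
    split_ifs at h with h1
    · rw [h1]; rfl
    · simp at h
  | soc i => simp [mulArrow] at h

theorem mulArrow_eq_none_of_ofPath_eq_some {d a : B.Arrow} {n : ℕ} {x : BasisPath B}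
    (h : ofPath B d n = some x) (ha : a ≠ (B.next ^ (n + 1)) d) : mulArrow B a x = none := by
  unfold ofPath at h
  split_ifs at h with h1 h2
  · cases h
    simp [mulArrow, ha]
  · cases h; rfl

theorem ofPath_bind_mulArrow (d : B.Arrow) (n : ℕ) :
    (ofPath B d n).bind (mulArrow B ((B.next ^ (n + 1)) d)) = ofPath B d (n + 1) := by
  by_cases h1 : n + 1 < B.cycleLength d
  · rw [ofPath, if_pos h1]; simp [mulArrow]
  · have : ofPath B d (n + 1) = none := by
      rw [ofPath, if_neg (by lia), if_neg (by lia)]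
    rw [this, ofPath, if_neg h1]
    split_ifs <;> rfl

theorem mulVertex_bind_mulVertex_self (i : B.Edge) (x : BasisPath B) :
    (mulVertex B i x).bind (mulVertex B i) = mulVertex B i x := by
  by_cases h : x.target = i <;> simp [mulVertex, h]

theorem mulVertex_bind_mulVertex_of_ne {i j : B.Edge} (h : i ≠ j) (x : BasisPath B) :
    (mulVertex B i x).bind (mulVertex B j) = none := by
  by_cases hx : x.target = i
  · simp [mulVertex, hx, h]
  · simp [mulVertex, hx]

theorem mulVertex_src_bind_mulArrow (a : B.Arrow) (x : BasisPath B) :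
    (mulVertex B (B.src a) x).bind (mulArrow B a) = mulArrow B a x := by
  by_cases h : x.target = B.src a
  · simp [mulVertex, h]
  · simp only [mulVertex, h, if_false, Option.bind_none]
    by_contra hne
    exact h (target_eq_of_mulArrow_ne_none fun h0 => hne h0.symm)

theorem mulArrow_bind_mulVertex_tgt (a : B.Arrow) (x : BasisPath B) :
    (mulArrow B a x).bind (mulVertex B (B.tgt a)) = mulArrow B a x := by
  rcases hx : mulArrow B a x with _ | y
  · rfl
  · simp [mulVertex, target_eq_of_mulArrow_eq_some hx]

theorem mulArrow_bind_of_fst_ne {a b : B.Arrow} (h : a.fst ≠ b.fst) (x : BasisPath B) :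
    (mulArrow B a x).bind (mulArrow B b) = none := by
  rcases hx : mulArrow B a x with _ | y
  · rfl
  · change mulArrow B b y = none
    cases x with
    | start i =>
      simp only [mulArrow] at hx
      split_ifs at hx
      refine mulArrow_eq_none_of_ofPath_eq_some hx ?_
      rintro rfl
      exact h (B.next_pow_fst _ _).symm
    | mid d m =>
      simp only [mulArrow] at hx
      split_ifs at hx with h1
      refine mulArrow_eq_none_of_ofPath_eq_some hx ?_
      rintro rfl
      rw [h1, B.next_pow_fst, B.next_pow_fst] at h
      exact h rfl
    | soc i => simp [mulArrow] at hx

theorem mulPath_start (d : B.Arrow) (n : ℕ) (i : B.Edge) [Decidable (B.src d = i)] :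
    mulPath B d (n + 1) (start i) = if B.src d = i then ofPath B d n else none := by
  induction n with
  | zero =>
    simp only [mulPath, mulArrow, pow_zero, Equiv.Perm.one_apply, Option.bind_some]
    split_ifs <;> rfl
  | succ n ih =>
    rw [mulPath, ih]
    split_ifs
    · exact ofPath_bind_mulArrow d n
    · rfl

theorem mulPath_mid (d d' : B.Arrow) (n m : ℕ) [Decidable (d = (B.next ^ (m + 1)) d')] :
    mulPath B d (n + 1) (mid d' m) =
      if d = (B.next ^ (m + 1)) d' then ofPath B d' (m + 1 + n) else none := by
  induction n with
  | zero =>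
    simp only [mulPath, mulArrow, pow_zero, Equiv.Perm.one_apply, Option.bind_some]
    split_ifs <;> rfl
  | succ n ih =>
    rw [mulPath, ih]
    split_ifs with h
    · subst h
      rw [← Equiv.Perm.mul_apply, ← pow_add, show n + 1 + (m + 1) = m + 1 + n + 1 by lia]
      exact ofPath_bind_mulArrow d' (m + 1 + n)
    · rfl

theorem mulPath_soc (d : B.Arrow) (n : ℕ) (i : B.Edge) : mulPath B d (n + 1) (soc i) = none := by
  induction n with
  | zero => rfl
  | succ n ih => rw [mulPath, ih]; rfl

open Classical in
theorem mulPath_cycleLength [Finite V] (d : B.Arrow) (x : BasisPath B) :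
    mulPath B d (B.cycleLength d) x =
      if x = start (B.src d) then some (soc (B.src d)) else none := by
  obtain ⟨n, hn⟩ := Nat.exists_eq_add_one_of_ne_zero (B.cycleLength_pos d).ne'
  rw [hn]
  cases x with
  | start i =>
    rw [mulPath_start]
    simp only [start.injEq, eq_comm (a := i)]
    split_ifs
    · rw [ofPath, if_neg (by lia), if_pos hn.symm]
    · rfl
  | mid d' m =>
    rw [mulPath_mid]
    simp only [reduceCtorEq, if_false]
    split_ifs with h
    · have : B.cycleLength d' = n + 1 := by rw [← hn, h, B.cycleLength_next_pow]
      rw [ofPath, if_neg (by lia), if_neg (by lia)]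
    · rfl
  | soc i =>
    rw [mulPath_soc]
    simp only [reduceCtorEq, if_false]

theorem mulPath_cycleLength_symm [Finite V] (d : B.Arrow) :
    mulPath B d (B.cycleLength d) = mulPath B d.symm (B.cycleLength d.symm) := by
  ext1 x
  rw [mulPath_cycleLength, mulPath_cycleLength, B.src_symm]

end BasisPath

open BasisPath

/-- The operator on functions on a type induced by a partial self-map, by precomposition and
extension by zero. -/
def partialOp {X : Type*} (p : X → Option X) : Module.End K (X → K) where
  toFun φ x := (p x).elim 0 φ
  map_add' φ ψ := by
    ext x
    rcases h : p x with _ | y <;> simp [h]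
  map_smul' c φ := by
    ext x
    rcases h : p x with _ | y <;> simp [h]

theorem partialOp_mul {X : Type*} (p q : X → Option X) :
    partialOp K p * partialOp K q = partialOp K (fun x => (p x).bind q) := by
  ext φ x
  rcases h : p x with _ | y <;> simp [partialOp, h]

theorem partialOp_none {X : Type*} : partialOp K (fun _ : X => none) = 0 := rfl

/-- The representation of the free algebra on functions on the standard basis that is dual to right
multiplication. -/
noncomputable def freeRep :
    FreeAlgebra K (B.Edge ⊕ B.Arrow) →ₐ[K] Module.End K (BasisPath B → K) :=
  FreeAlgebra.lift K (Sum.elim (fun i => partialOp K (mulVertex B i))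
    (fun a => partialOp K (mulArrow B a)))

@[simp] theorem freeRep_genVertex (i : B.Edge) :
    B.freeRep K (B.genVertex K i) = partialOp K (mulVertex B i) := by
  simp [freeRep, genVertex]

@[simp] theorem freeRep_genArrow (a : B.Arrow) :
    B.freeRep K (B.genArrow K a) = partialOp K (mulArrow B a) := by
  simp [freeRep, genArrow]

theorem genPath_succ (d : B.Arrow) (m : ℕ) :
    B.genPath K d (m + 1) = B.genPath K d m * B.genArrow K ((B.next ^ m) d) := by
  simp [genPath, List.range_succ]

theorem freeRep_genPath (d : B.Arrow) (m : ℕ) :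
    B.freeRep K (B.genPath K d m) = partialOp K (mulPath B d m) := by
  induction m with
  | zero => simp [genPath]; rfl
  | succ m ih =>
    rw [genPath_succ, map_mul, ih, freeRep_genArrow, partialOp_mul]
    rfl

theorem sum_partialOp_mulVertex [Fintype B.Edge] :
    ∑ i : B.Edge, partialOp K (mulVertex B i) = 1 := by
  ext φ x
  simp only [LinearMap.sum_apply, Finset.sum_apply, Module.End.one_apply]
  rw [Finset.sum_eq_single x.target]
  · simp [partialOp, mulVertex]
  · intro j _ hj
    simp [partialOp, mulVertex, hj.symm]
  · simp

theorem freeRep_rel [Finite V] ⦃x y : FreeAlgebra K (B.Edge ⊕ B.Arrow)⦄ (h : Rel B K x y) :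
    B.freeRep K x = B.freeRep K y := by
  cases h with
  | vertex_mul_self i =>
    simp only [map_mul, freeRep_genVertex, partialOp_mul, mulVertex_bind_mulVertex_self]
  | vertex_mul_vertex i j h =>
    simp only [map_mul, map_zero, freeRep_genVertex, partialOp_mul,
      mulVertex_bind_mulVertex_of_ne h, partialOp_none]
  | sum_vertex =>
    have := Fintype.ofFinite B.Edge
    simp only [finsum_eq_sum_of_fintype, map_sum, map_one, freeRep_genVertex,
      sum_partialOp_mulVertex]
  | src_mul d =>
    simp only [map_mul, freeRep_genVertex, freeRep_genArrow, partialOp_mul,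
      mulVertex_src_bind_mulArrow]
  | mul_tgt d =>
    simp only [map_mul, freeRep_genVertex, freeRep_genArrow, partialOp_mul,
      mulArrow_bind_mulVertex_tgt]
  | arrow_mul_arrow d d' h =>
    simp only [map_mul, map_zero, freeRep_genArrow, partialOp_mul, mulArrow_bind_of_fst_ne h,
      partialOp_none]
  | cycle_eq d =>
    simp only [freeRep_genPath, mulPath_cycleLength_symm d]

/-- The representation of the Brauer tree algebra on functions on its standard basis; it shows that
the full cycles do not vanish in the algebra. -/
noncomputable def rep [Finite V] : B.Alg K →ₐ[K] Module.End K (BasisPath B → K) :=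
  RingQuot.liftAlgHom K ⟨B.freeRep K, B.freeRep_rel K⟩

/-- The quotient map from the free algebra on the vertices and arrows of the quiver. -/
noncomputable def toAlg : FreeAlgebra K (B.Edge ⊕ B.Arrow) →ₐ[K] B.Alg K :=
  RingQuot.mkAlgHom K (Rel B K)

theorem rep_toAlg [Finite V] (x : FreeAlgebra K (B.Edge ⊕ B.Arrow)) :
    B.rep K (B.toAlg K x) = B.freeRep K x :=
  RingQuot.liftAlgHom_mkAlgHom_apply K _ _ _

end BrauerTree

/-! ### Paths in the Brauer tree algebra -/

namespace BrauerTree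

variable {V : Type v} (B : BrauerTree V) (K : Type u) [Field K]

/-- The arrow `d` as an element of the algebra. -/
noncomputable def arr (d : B.Arrow) : B.Alg K := B.toAlg K (B.genArrow K d)

/-- The path of length `m` along a cycle that starts with `d`. -/
noncomputable def pathElt (d : B.Arrow) (m : ℕ) : B.Alg K := B.toAlg K (B.genPath K d m)

variable {K}

theorem toAlg_rel {x y : FreeAlgebra K (B.Edge ⊕ B.Arrow)} (h : Rel B K x y) :
    B.toAlg K x = B.toAlg K y :=
  RingQuot.mkAlgHom_rel K h

theorem idem_eq (i : B.Edge) : B.idem K i = B.toAlg K (B.genVertex K i) := rfl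

theorem idem_mul_self (i : B.Edge) : B.idem K i * B.idem K i = B.idem K i := by
  rw [idem_eq, ← map_mul]; exact B.toAlg_rel (.vertex_mul_self i)

theorem idem_mul_of_ne {i j : B.Edge} (h : i ≠ j) : B.idem K i * B.idem K j = 0 := by
  rw [idem_eq, idem_eq, ← map_mul, B.toAlg_rel (.vertex_mul_vertex i j h), map_zero]

theorem sum_idem [Fintype B.Edge] : ∑ i : B.Edge, B.idem K i = 1 := by
  have := B.toAlg_rel (K := K) .sum_vertex
  rw [finsum_eq_sum_of_fintype, map_sum, map_one] at this
  exact this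

theorem idem_src_mul_arr (d : B.Arrow) : B.idem K (B.src d) * B.arr K d = B.arr K d := by
  rw [idem_eq, arr, ← map_mul]; exact B.toAlg_rel (.src_mul d)

theorem arr_mul_idem_tgt (d : B.Arrow) : B.arr K d * B.idem K (B.src (B.next d)) = B.arr K d := by
  rw [idem_eq, arr, ← map_mul]; exact B.toAlg_rel (.mul_tgt d)

theorem idem_mul_arr_of_ne {d : B.Arrow} {i : B.Edge} (h : i ≠ B.src d) :
    B.idem K i * B.arr K d = 0 := by
  rw [← idem_src_mul_arr, ← mul_assoc, B.idem_mul_of_ne h, zero_mul]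

theorem arr_mul_arr_of_ne {d d' : B.Arrow} (h : d' ≠ B.next d) : B.arr K d * B.arr K d' = 0 := by
  by_cases hf : d.fst = d'.fst
  · have hs : B.src (B.next d) ≠ B.src d' := fun hs =>
      h (B.eq_of_src_eq_of_fst_eq hs ((B.next_fst d).trans hf)).symm
    rw [← arr_mul_idem_tgt, mul_assoc, B.idem_mul_arr_of_ne hs, mul_zero]
  · rw [arr, arr, ← map_mul, B.toAlg_rel (.arrow_mul_arrow d d' hf), map_zero]

@[simp] theorem pathElt_zero (d : B.Arrow) : B.pathElt K d 0 = 1 := by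
  simp only [pathElt, genPath, List.range_zero, List.map_nil, List.prod_nil, map_one]

theorem pathElt_succ (d : B.Arrow) (m : ℕ) :
    B.pathElt K d (m + 1) = B.pathElt K d m * B.arr K ((B.next ^ m) d) := by
  rw [pathElt, genPath_succ, map_mul]; rfl

theorem pathElt_one (d : B.Arrow) : B.pathElt K d 1 = B.arr K d := by
  rw [← zero_add 1, pathElt_succ, pathElt_zero, one_mul, pow_zero, Equiv.Perm.one_apply]

theorem pathElt_add (d : B.Arrow) (m n : ℕ) :
    B.pathElt K d (m + n) = B.pathElt K d m * B.pathElt K ((B.next ^ m) d) n := by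
  induction n with
  | zero => simp
  | succ n ih =>
    rw [← add_assoc, pathElt_succ, ih, pathElt_succ, mul_assoc, ← Equiv.Perm.mul_apply,
      ← pow_add, add_comm n m]

theorem pathElt_succ' (d : B.Arrow) (m : ℕ) :
    B.pathElt K d (m + 1) = B.arr K d * B.pathElt K (B.next d) m := by
  rw [add_comm, pathElt_add, pathElt_one, pow_one]

theorem idem_mul_pathElt (d : B.Arrow) {m : ℕ} (hm : 0 < m) :
    B.idem K (B.src d) * B.pathElt K d m = B.pathElt K d m := by
  obtain ⟨n, rfl⟩ := Nat.exists_eq_add_one.mpr hm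
  rw [pathElt_succ', ← mul_assoc, idem_src_mul_arr]

theorem pathElt_mul_idem (d : B.Arrow) {m : ℕ} (hm : 0 < m) :
    B.pathElt K d m * B.idem K (B.src ((B.next ^ m) d)) = B.pathElt K d m := by
  obtain ⟨n, rfl⟩ := Nat.exists_eq_add_one.mpr hm
  rw [pathElt_succ, mul_assoc, pow_succ', Equiv.Perm.mul_apply, arr_mul_idem_tgt]

theorem pathElt_mul_arr_of_ne {d d' : B.Arrow} {m : ℕ} (hm : 0 < m) (h : d' ≠ (B.next ^ m) d) :
    B.pathElt K d m * B.arr K d' = 0 := by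
  obtain ⟨n, rfl⟩ := Nat.exists_eq_add_one.mpr hm
  rw [pow_succ', Equiv.Perm.mul_apply] at h
  rw [pathElt_succ, mul_assoc, B.arr_mul_arr_of_ne h, mul_zero]

theorem pathElt_mul_pathElt_of_ne {d d' : B.Arrow} {m n : ℕ} (hm : 0 < m) (hn : 0 < n)
    (h : d' ≠ (B.next ^ m) d) : B.pathElt K d m * B.pathElt K d' n = 0 := by
  obtain ⟨n, rfl⟩ := Nat.exists_eq_add_one.mpr hn
  rw [pathElt_succ', ← mul_assoc, B.pathElt_mul_arr_of_ne hm h, zero_mul]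

theorem pathElt_mul_pathElt_of_fst_ne {d d' : B.Arrow} {m n : ℕ} (hm : 0 < m) (hn : 0 < n)
    (h : d.fst ≠ d'.fst) : B.pathElt K d m * B.pathElt K d' n = 0 :=
  B.pathElt_mul_pathElt_of_ne hm hn fun h' => h (by rw [h', B.next_pow_fst])

theorem pathElt_cycleLength_symm (d : B.Arrow) :
    B.pathElt K d (B.cycleLength d) = B.pathElt K d.symm (B.cycleLength d.symm) :=
  B.toAlg_rel (.cycle_eq d)

variable (K) in
/-- The span of the idempotents and of the nonzero paths. -/
noncomputable def pathSpan : Submodule K (B.Alg K) :=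
  Submodule.span K (Set.range (B.idem K) ∪
    {y | ∃ (d : B.Arrow) (m : ℕ), 0 < m ∧ m ≤ B.cycleLength d ∧ y = B.pathElt K d m})

theorem idem_mem_pathSpan (i : B.Edge) : B.idem K i ∈ B.pathSpan K :=
  Submodule.subset_span (Or.inl ⟨i, rfl⟩)

@[elab_as_elim]
theorem pathSpan_induction {p : B.Alg K → Prop} (idem : ∀ i, p (B.idem K i))
    (path : ∀ (d : B.Arrow) (m : ℕ), 0 < m → m ≤ B.cycleLength d → p (B.pathElt K d m))
    (zero : p 0) (add : ∀ x y, p x → p y → p (x + y)) (smul : ∀ (c : K) (x), p x → p (c • x))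
    {w : B.Alg K} (hw : w ∈ B.pathSpan K) : p w := by
  refine Submodule.span_induction ?_ zero (fun x y _ _ => add x y) (fun c x _ => smul c x) hw
  rintro _ (⟨i, rfl⟩ | ⟨d, m, hm, hm', rfl⟩)
  exacts [idem i, path d m hm hm']

variable (K) in
/-- The nonzero paths from `a` to `b`, including the trivial one if `a = b`. -/
def pathsBetween (a b : B.Edge) : Set (B.Alg K) :=
  {y | a = b ∧ y = B.idem K a} ∪ {y | ∃ (d : B.Arrow) (m : ℕ), 0 < m ∧ m ≤ B.cycleLength d ∧
    B.src d = a ∧ B.src ((B.next ^ m) d) = b ∧ y = B.pathElt K d m}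

section Finite

variable [Finite V]

theorem pathElt_cycleLength_mul_arr (d d' : B.Arrow) :
    B.pathElt K d (B.cycleLength d) * B.arr K d' = 0 := by
  by_cases h : d' = d
  · subst h
    rw [pathElt_cycleLength_symm]
    refine B.pathElt_mul_arr_of_ne (B.cycleLength_pos _) ?_
    rw [B.next_pow_cycleLength]
    exact fun h => B.fst_symm_ne d' (congrArg (fun d : B.Arrow => d.fst) h).symm
  · refine B.pathElt_mul_arr_of_ne (B.cycleLength_pos _) ?_
    rwa [B.next_pow_cycleLength]

theorem pathElt_eq_zero {d : B.Arrow} {m : ℕ} (h : B.cycleLength d < m) :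
    B.pathElt K d m = 0 := by
  obtain ⟨n, rfl⟩ := Nat.exists_eq_add_of_lt h
  rw [add_assoc, add_comm n 1, ← add_assoc, pathElt_add, pathElt_succ,
    pathElt_cycleLength_mul_arr, zero_mul]

theorem pathElt_cycleLength_mul_pathElt (d d' : B.Arrow) {m : ℕ} (hm : 0 < m) :
    B.pathElt K d (B.cycleLength d) * B.pathElt K d' m = 0 := by
  obtain ⟨n, rfl⟩ := Nat.exists_eq_add_one.mpr hm
  rw [pathElt_succ', ← mul_assoc, pathElt_cycleLength_mul_arr, zero_mul]

theorem pathElt_mul_pathElt_cycleLength (d d' : B.Arrow) {m : ℕ} (hm : 0 < m) :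
    B.pathElt K d' m * B.pathElt K d (B.cycleLength d) = 0 := by
  by_cases h : d = (B.next ^ m) d'
  · have h2 : d.symm ≠ (B.next ^ m) d' := by
      rw [← h]
      exact fun h => B.fst_symm_ne d (congrArg (fun d : B.Arrow => d.fst) h)
    rw [pathElt_cycleLength_symm, B.pathElt_mul_pathElt_of_ne hm (B.cycleLength_pos _) h2]
  · exact B.pathElt_mul_pathElt_of_ne hm (B.cycleLength_pos _) h

theorem pathElt_cycleLength_ne_zero (d : B.Arrow) : B.pathElt K d (B.cycleLength d) ≠ 0 := by
  classical
  intro h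
  have h1 : B.rep K (B.pathElt K d (B.cycleLength d)) = 0 := by rw [h, map_zero]
  rw [pathElt, rep_toAlg, freeRep_genPath] at h1
  have h2 := congrFun (LinearMap.congr_fun h1 fun _ => 1) (BasisPath.start (B.src d))
  simp [partialOp, BasisPath.mulPath_cycleLength] at h2

theorem pathElt_ne_zero {d : B.Arrow} {m : ℕ} (h : m ≤ B.cycleLength d) :
    B.pathElt K d m ≠ 0 := by
  intro h0
  obtain ⟨n, hn⟩ := Nat.exists_eq_add_of_le h
  apply B.pathElt_cycleLength_ne_zero (K := K) d
  rw [hn, pathElt_add, h0, zero_mul]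

theorem idem_ne_zero (i : B.Edge) : B.idem K i ≠ 0 := by
  obtain ⟨d, rfl⟩ := B.exists_src_eq i
  intro h
  apply B.pathElt_cycleLength_ne_zero (K := K) d
  rw [← B.idem_mul_pathElt d (B.cycleLength_pos d), h, zero_mul]

theorem pathElt_mem_pathSpan (d : B.Arrow) {m : ℕ} (hm : 0 < m) :
    B.pathElt K d m ∈ B.pathSpan K := by
  by_cases h : m ≤ B.cycleLength d
  · exact Submodule.subset_span (Or.inr ⟨d, m, hm, h, rfl⟩)
  · rw [B.pathElt_eq_zero (by lia)]
    exact zero_mem _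

theorem mul_idem_mem_pathSpan {w : B.Alg K} (hw : w ∈ B.pathSpan K) (j : B.Edge) :
    w * B.idem K j ∈ B.pathSpan K := by
  refine pathSpan_induction B (fun i => ?_) (fun d m hm _ => ?_) ?_ (fun x y hx hy => ?_)
    (fun c x hx => ?_) hw
  · rcases eq_or_ne i j with rfl | h
    · rw [idem_mul_self]
      exact B.idem_mem_pathSpan i
    · rw [B.idem_mul_of_ne h]
      exact zero_mem _
  · rcases eq_or_ne (B.src ((B.next ^ m) d)) j with rfl | h
    · rw [B.pathElt_mul_idem d hm]
      exact B.pathElt_mem_pathSpan d hm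
    · rw [← B.pathElt_mul_idem d hm, mul_assoc, B.idem_mul_of_ne h, mul_zero]
      exact zero_mem _
  · rw [zero_mul]
    exact zero_mem _
  · rw [add_mul]
    exact add_mem hx hy
  · rw [smul_mul_assoc]
    exact Submodule.smul_mem _ _ hx

theorem mul_arr_mem_pathSpan {w : B.Alg K} (hw : w ∈ B.pathSpan K) (a : B.Arrow) :
    w * B.arr K a ∈ B.pathSpan K := by
  refine pathSpan_induction B (fun i => ?_) (fun d m hm _ => ?_) ?_ (fun x y hx hy => ?_)
    (fun c x hx => ?_) hw
  · rcases eq_or_ne i (B.src a) with rfl | h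
    · rw [idem_src_mul_arr, ← pathElt_one]
      exact B.pathElt_mem_pathSpan a one_pos
    · rw [B.idem_mul_arr_of_ne h]
      exact zero_mem _
  · rcases eq_or_ne a ((B.next ^ m) d) with rfl | h
    · rw [← pathElt_succ]
      exact B.pathElt_mem_pathSpan d m.succ_pos
    · rw [B.pathElt_mul_arr_of_ne hm h]
      exact zero_mem _
  · rw [zero_mul]
    exact zero_mem _
  · rw [add_mul]
    exact add_mem hx hy
  · rw [smul_mul_assoc]
    exact Submodule.smul_mem _ _ hx

theorem mul_mem_pathSpan {w : B.Alg K} (hw : w ∈ B.pathSpan K)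
    (x : FreeAlgebra K (B.Edge ⊕ B.Arrow)) : w * B.toAlg K x ∈ B.pathSpan K := by
  induction x using FreeAlgebra.induction generalizing w with
  | grade0 r =>
    rw [AlgHom.commutes, ← Algebra.commutes, ← Algebra.smul_def]
    exact Submodule.smul_mem _ _ hw
  | grade1 x =>
    rcases x with j | a
    exacts [B.mul_idem_mem_pathSpan hw j, B.mul_arr_mem_pathSpan hw a]
  | mul x y hx hy =>
    rw [map_mul, ← mul_assoc]
    exact hy (hx hw)
  | add x y hx hy =>
    rw [map_add, mul_add]
    exact add_mem (hx hw) (hy hw)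

theorem mem_pathSpan (x : B.Alg K) : x ∈ B.pathSpan K := by
  have := Fintype.ofFinite B.Edge
  obtain ⟨y, rfl⟩ := RingQuot.mkAlgHom_surjective K (Rel B K) x
  have h1 : (1 : B.Alg K) ∈ B.pathSpan K := by
    rw [← sum_idem]
    exact sum_mem fun i _ => B.idem_mem_pathSpan i
  rw [← one_mul (RingQuot.mkAlgHom K (Rel B K) y)]
  exact B.mul_mem_pathSpan h1 y

theorem idem_mul_mul_idem_mem (a b : B.Edge) (x : B.Alg K) :
    B.idem K a * x * B.idem K b ∈ Submodule.span K (B.pathsBetween K a b) := by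
  refine pathSpan_induction B (fun i => ?_) (fun d m hm hm' => ?_) ?_ (fun x y hx hy => ?_)
    (fun c x hx => ?_) (B.mem_pathSpan x)
  · rcases ne_or_eq a i with h | rfl
    · rw [B.idem_mul_of_ne h, zero_mul]
      exact zero_mem _
    rcases ne_or_eq a b with h | rfl
    · rw [idem_mul_self, B.idem_mul_of_ne h]
      exact zero_mem _
    rw [idem_mul_self, idem_mul_self]
    exact Submodule.subset_span (Or.inl ⟨rfl, rfl⟩)
  · rcases ne_or_eq a (B.src d) with h | rfl
    · rw [← B.idem_mul_pathElt d hm, ← mul_assoc, B.idem_mul_of_ne h, zero_mul, zero_mul]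
      exact zero_mem _
    rcases ne_or_eq (B.src ((B.next ^ m) d)) b with h | rfl
    · rw [B.idem_mul_pathElt d hm, ← B.pathElt_mul_idem d hm, mul_assoc, B.idem_mul_of_ne h,
        mul_zero]
      exact zero_mem _
    rw [B.idem_mul_pathElt d hm, B.pathElt_mul_idem d hm]
    exact Submodule.subset_span (Or.inr ⟨d, m, hm, hm', rfl, rfl, rfl⟩)
  · rw [mul_zero, zero_mul]
    exact zero_mem _
  · rw [mul_add, add_mul]
    exact add_mem hx hy
  · rw [mul_smul_comm, smul_mul_assoc]
    exact Submodule.smul_mem _ _ hx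

end Finite

end BrauerTree

/-! ### The distance on a cycle and the Peirce components -/

namespace BrauerTree

variable {V : Type v} (B : BrauerTree V) {K : Type u} [Field K]

/-- The number of steps from `d` to `d'` along their common cycle, and `0` if they lie on different
cycles. -/
noncomputable def dist (d d' : B.Arrow) : ℕ := sInf {m | (B.next ^ m) d = d'}

theorem dist_le {d d' : B.Arrow} {m : ℕ} (h : (B.next ^ m) d = d') : B.dist d d' ≤ m :=
  Nat.sInf_le h

section Finite

variable [Finite V]

theorem next_pow_dist {d d' : B.Arrow} (h : d.fst = d'.fst) : (B.next ^ B.dist d d') d = d' := by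
  obtain ⟨m, -, hm⟩ := B.exists_next_pow_eq h
  exact Nat.sInf_mem (s := {m | (B.next ^ m) d = d'}) ⟨m, hm⟩

theorem dist_lt {d d' : B.Arrow} (h : d.fst = d'.fst) : B.dist d d' < B.cycleLength d := by
  obtain ⟨m, hm, hm'⟩ := B.exists_next_pow_eq h
  exact (B.dist_le hm').trans_lt hm

theorem dist_eq {d d' : B.Arrow} {m : ℕ} (hm : m < B.cycleLength d) (h : (B.next ^ m) d = d') :
    B.dist d d' = m := by
  have hf : d.fst = d'.fst := by rw [← h, B.next_pow_fst]
  exact B.eq_of_next_pow_eq d (B.dist_lt hf) hm ((B.next_pow_dist hf).trans h.symm)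

theorem dist_pos {d d' : B.Arrow} (h : d.fst = d'.fst) (hne : d ≠ d') : 0 < B.dist d d' := by
  rw [Nat.pos_iff_ne_zero]
  intro h0
  apply hne
  rw [← B.next_pow_dist h, h0, pow_zero, Equiv.Perm.one_apply]

theorem dist_self (d : B.Arrow) : B.dist d d = 0 := B.dist_eq (B.cycleLength_pos d) rfl

theorem dist_next_symm_lt {d d' : B.Arrow} (h : d.fst = d'.fst) (hne : d ≠ d') :
    B.dist d (B.next.symm d') < B.dist d d' := by
  have h_pos := B.dist_pos h hne
  refine (B.dist_le (m := B.dist d d' - 1) ?_).trans_lt (Nat.sub_one_lt h_pos.ne')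
  rw [Equiv.eq_symm_apply, ← Equiv.Perm.mul_apply, ← pow_succ', Nat.sub_add_cancel h_pos,
    B.next_pow_dist h]

theorem dist_add {d d' d'' : B.Arrow} (h : d.fst = d'.fst) (h' : d'.fst = d''.fst) :
    B.dist d d' + B.dist d' d'' = B.dist d d'' ∨
      B.dist d d' + B.dist d' d'' = B.dist d d'' + B.cycleLength d := by
  have h1 := B.dist_lt h
  have h2 := B.dist_lt h'
  rw [← B.cycleLength_eq h] at h2
  have h3 : (B.next ^ (B.dist d d' + B.dist d' d'')) d = d'' := by
    rw [add_comm, pow_add, Equiv.Perm.mul_apply, B.next_pow_dist h, B.next_pow_dist h']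
  by_cases hlt : B.dist d d' + B.dist d' d'' < B.cycleLength d
  · exact Or.inl (B.dist_eq hlt h3).symm
  · right
    have h4 : (B.next ^ (B.dist d d' + B.dist d' d'' - B.cycleLength d)) d = d'' := by
      rw [← B.next_pow_mod, ← Nat.mod_eq_sub_mod (by lia), B.next_pow_mod, h3]
    rw [B.dist_eq (by lia) h4]
    lia

theorem dist_add_comm {d d' : B.Arrow} (h : d.fst = d'.fst) (hne : d ≠ d') :
    B.dist d d' + B.dist d' d = B.cycleLength d := by
  have h0 := B.dist_self d
  have := B.dist_pos h hne
  have := B.dist_add h h.symm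
  lia

variable (K) in
/-- The path from `d` to `d'` along their common cycle. -/
noncomputable def arc (d d' : B.Arrow) : B.Alg K := B.pathElt K d (B.dist d d')

theorem arc_ne_zero {d d' : B.Arrow} (h : d.fst = d'.fst) : B.arc K d d' ≠ 0 :=
  B.pathElt_ne_zero (B.dist_lt h).le

theorem arc_mul_arc {d d' d'' : B.Arrow} (h : d.fst = d'.fst) :
    B.arc K d d' * B.arc K d' d'' = B.pathElt K d (B.dist d d' + B.dist d' d'') := by
  rw [arc, arc, pathElt_add, B.next_pow_dist h]

theorem arc_mul_arc_of_dist_le {d d' d'' : B.Arrow} (h : d.fst = d'.fst) (h' : d'.fst = d''.fst)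
    (hle : B.dist d d' ≤ B.dist d d'') : B.arc K d d' * B.arc K d' d'' = B.arc K d d'' := by
  rw [arc_mul_arc B h, arc]
  have := B.dist_lt h'
  rw [← B.cycleLength_eq h] at this
  have := B.dist_add h h'
  congr 1
  lia

theorem arc_mul_arc_of_dist_le' {d d' d'' : B.Arrow} (h : d.fst = d'.fst) (h' : d'.fst = d''.fst)
    (hle : B.dist d' d'' ≤ B.dist d d'') : B.arc K d d' * B.arc K d' d'' = B.arc K d d'' := by
  rw [arc_mul_arc B h, arc]
  have := B.dist_lt h
  have := B.dist_add h h'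
  congr 1
  lia

theorem arc_mul_arc_self {d d' : B.Arrow} (h : d.fst = d'.fst) (hne : d ≠ d') :
    B.arc K d d' * B.arc K d' d = B.pathElt K d (B.cycleLength d) := by
  rw [arc_mul_arc B h, B.dist_add_comm h hne]

theorem arc_mul_arc_eq_zero {d d' d'' : B.Arrow} (h : d.fst = d'.fst)
    (hlt : B.cycleLength d < B.dist d d' + B.dist d' d'') :
    B.arc K d d' * B.arc K d' d'' = 0 := by
  rw [arc_mul_arc B h, B.pathElt_eq_zero hlt]

theorem arc_mul_arc_of_fst_ne {a b c d : B.Arrow} (hab : a.fst = b.fst) (hcd : c.fst = d.fst)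
    (h1 : a ≠ b) (h2 : c ≠ d) (h : a.fst ≠ c.fst) : B.arc K a b * B.arc K c d = 0 :=
  B.pathElt_mul_pathElt_of_fst_ne (B.dist_pos hab h1) (B.dist_pos hcd h2) h

end Finite

variable (K) in
/-- `x` is an element of `e_a A e_b`. -/
def IsPeirce (a b : B.Edge) (x : B.Alg K) : Prop := B.idem K a * x = x ∧ x * B.idem K b = x

variable {B}

theorem isPeirce_zero (a b : B.Edge) : B.IsPeirce K a b 0 := ⟨mul_zero _, zero_mul _⟩

theorem isPeirce_idem (a : B.Edge) : B.IsPeirce K a a (B.idem K a) :=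
  ⟨B.idem_mul_self a, B.idem_mul_self a⟩

theorem IsPeirce.add {a b : B.Edge} {x y : B.Alg K} (hx : B.IsPeirce K a b x)
    (hy : B.IsPeirce K a b y) : B.IsPeirce K a b (x + y) :=
  ⟨by rw [mul_add, hx.1, hy.1], by rw [add_mul, hx.2, hy.2]⟩

theorem IsPeirce.smul {a b : B.Edge} {x : B.Alg K} (hx : B.IsPeirce K a b x) (c : K) :
    B.IsPeirce K a b (c • x) :=
  ⟨by rw [mul_smul_comm, hx.1], by rw [smul_mul_assoc, hx.2]⟩

theorem IsPeirce.mul {a b c : B.Edge} {x y : B.Alg K} (hx : B.IsPeirce K a b x)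
    (hy : B.IsPeirce K b c y) : B.IsPeirce K a c (x * y) :=
  ⟨by rw [← mul_assoc, hx.1], by rw [mul_assoc, hy.2]⟩

section Finite

variable [Finite V]

theorem isPeirce_arc {d d' : B.Arrow} (h : d.fst = d'.fst) (hne : d ≠ d') :
    B.IsPeirce K (B.src d) (B.src d') (B.arc K d d') := by
  have h1 := B.dist_pos h hne
  refine ⟨B.idem_mul_pathElt d h1, ?_⟩
  have := B.pathElt_mul_idem (K := K) d h1
  rwa [B.next_pow_dist h] at this

theorem isPeirce_pathElt_cycleLength (d : B.Arrow) :
    B.IsPeirce K (B.src d) (B.src d) (B.pathElt K d (B.cycleLength d)) := by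
  refine ⟨B.idem_mul_pathElt d (B.cycleLength_pos d), ?_⟩
  have := B.pathElt_mul_idem (K := K) d (B.cycleLength_pos d)
  rwa [B.next_pow_cycleLength] at this

theorem IsPeirce.mem_span {a b : B.Edge} {x : B.Alg K} (hx : B.IsPeirce K a b x) :
    x ∈ Submodule.span K (B.pathsBetween K a b) := by
  have := B.idem_mul_mul_idem_mem a b x
  rwa [hx.1, hx.2] at this

theorem IsPeirce.exists_eq_smul_arc {d d' : B.Arrow} {x : B.Alg K}
    (hx : B.IsPeirce K (B.src d) (B.src d') x) (hf : d.fst = d'.fst) (hne : d ≠ d') :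
    ∃ c : K, x = c • B.arc K d d' := by
  have hs : B.src d ≠ B.src d' := fun h => hne (B.eq_of_src_eq_of_fst_eq h hf)
  have h1 : x ∈ Submodule.span K {B.arc K d d'} := by
    refine Submodule.span_mono ?_ hx.mem_span
    rintro y (⟨h, -⟩ | ⟨e, m, -, hm, h1, h2, rfl⟩)
    · exact absurd h hs
    · obtain ⟨rfl, h3⟩ := B.eq_and_eq_of_src_eq h1 h2 (by rwa [h1, h2]) (B.next_pow_fst e m).symm hf
      have hm' : m ≠ B.cycleLength e := by
        rintro rfl
        rw [B.next_pow_cycleLength] at h3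
        exact hne h3
      rw [Set.mem_singleton_iff, arc, B.dist_eq (by lia) h3]
  obtain ⟨c, hc⟩ := Submodule.mem_span_singleton.1 h1
  exact ⟨c, hc.symm⟩

theorem IsPeirce.eq_zero_of_forall_fst_ne {a b : B.Edge} {x : B.Alg K} (hx : B.IsPeirce K a b x)
    (hab : a ≠ b) (h : ∀ d d' : B.Arrow, B.src d = a → B.src d' = b → d.fst ≠ d'.fst) :
    x = 0 := by
  have h1 := hx.mem_span
  rw [← Submodule.mem_bot K, ← Submodule.span_empty]
  refine Submodule.span_mono ?_ h1
  rintro y (⟨h, -⟩ | ⟨d, m, -, -, h1, h2, rfl⟩)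
  · exact hab h
  · exact h d _ h1 h2 (B.next_pow_fst d m).symm

theorem IsPeirce.exists_of_ne_zero {a b : B.Edge} {x : B.Alg K} (hx : B.IsPeirce K a b x)
    (hab : a ≠ b) (h0 : x ≠ 0) :
    ∃ (d d' : B.Arrow) (c : K), B.src d = a ∧ B.src d' = b ∧ d.fst = d'.fst ∧ d ≠ d' ∧ c ≠ 0 ∧
      x = c • B.arc K d d' := by
  by_contra hcon
  refine h0 (hx.eq_zero_of_forall_fst_ne hab fun d d' h1 h2 h3 => hcon ?_)
  subst h1 h2
  have hne : d ≠ d' := fun h => hab (congrArg B.src h)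
  obtain ⟨c, hc⟩ := hx.exists_eq_smul_arc h3 hne
  refine ⟨d, d', c, rfl, rfl, h3, hne, ?_, hc⟩
  rintro rfl
  exact h0 (by rw [hc, zero_smul])

theorem IsPeirce.exists_eq_add {d : B.Arrow} {x : B.Alg K}
    (hx : B.IsPeirce K (B.src d) (B.src d) x) :
    ∃ c c' : K, x = c • B.idem K (B.src d) + c' • B.pathElt K d (B.cycleLength d) := by
  have h1 : x ∈ Submodule.span K {B.idem K (B.src d), B.pathElt K d (B.cycleLength d)} := by
    refine Submodule.span_mono ?_ hx.mem_span
    rintro y (⟨-, rfl⟩ | ⟨e, m, hm0, hm, h1, h2, rfl⟩)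
    · exact Or.inl rfl
    · right
      rw [Set.mem_singleton_iff]
      have h3 : (B.next ^ m) e = e :=
        B.eq_of_src_eq_of_fst_eq (h2.trans h1.symm) (B.next_pow_fst e m)
      have h4 : m = B.cycleLength e := by
        by_contra hne
        have := B.eq_of_next_pow_eq e (m := m) (n := 0) (by lia) (B.cycleLength_pos e) h3
        lia
      rw [h4]
      rcases B.src_eq_iff.1 h1 with rfl | rfl
      · rfl
      · rw [← B.pathElt_cycleLength_symm]
  obtain ⟨c, c', h⟩ := Submodule.mem_span_pair.1 h1
  exact ⟨c, c', h.symm⟩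

end Finite

end BrauerTree

/-! ### Idempotent endomorphisms of presentations -/

section Idempotent

variable {A : Type u} [Ring A]

theorem eq_zero_or_eq_id_of_indecomposable {M : ModuleCat.{u} A} (hM : Indecomposable M)
    (q : M →ₗ[A] M) (hq : q ∘ₗ q = q) : q = 0 ∨ q = LinearMap.id := by
  have hq' : IsIdempotentElem q := hq
  have hc := LinearMap.IsIdempotentElem.isCompl hq'
  let e : M ≅ ModuleCat.of A (LinearMap.range q) ⊞ ModuleCat.of A (LinearMap.ker q) :=
    (Submodule.prodEquivOfIsCompl _ _ hc).symm.toModuleIso ≪≫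
      (ModuleCat.biprodIsoProd (ModuleCat.of A (LinearMap.range q))
        (ModuleCat.of A (LinearMap.ker q))).symm
  rcases hM.2 _ _ e with h | h
  · left
    have := ModuleCat.subsingleton_of_isZero h
    ext x
    exact congrArg Subtype.val
      (Subsingleton.elim (α := LinearMap.range q) ⟨q x, ⟨x, rfl⟩⟩ 0)
  · right
    have := ModuleCat.subsingleton_of_isZero h
    ext x
    have hx : x - q x ∈ LinearMap.ker q := by
      rw [LinearMap.mem_ker, map_sub, sub_eq_zero]
      exact (LinearMap.congr_fun hq x).symm
    have := congrArg Subtype.val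
      (Subsingleton.elim (α := LinearMap.ker q) ⟨x - q x, hx⟩ 0)
    exact (sub_eq_zero.1 this).symm

theorem IsSuperfluous.eq_zero_of_range_le {M : Type*} [AddCommGroup M] [Module A M]
    {N : Submodule A M} (hN : IsSuperfluous N) {ε : M →ₗ[A] M} (hε : ε ∘ₗ ε = ε)
    (h : LinearMap.range ε ≤ N) : ε = 0 := by
  have h1 : LinearMap.range (LinearMap.id - ε) = ⊤ := by
    apply hN
    rw [eq_top_iff]
    intro x _
    rw [Submodule.mem_sup]
    exact ⟨ε x, h ⟨x, rfl⟩, x - ε x, ⟨x, rfl⟩, by abel⟩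
  ext x
  obtain ⟨y, rfl⟩ : x ∈ LinearMap.range (LinearMap.id - ε) := h1 ▸ Submodule.mem_top
  have := LinearMap.congr_fun hε y
  simp only [LinearMap.comp_apply] at this
  simp [this]

theorem exists_comp_eq_comp_of_ker_le {M N : Type*} [AddCommGroup M] [Module A M] [AddCommGroup N]
    [Module A N] {p : M →ₗ[A] N} (hp : Function.Surjective p) {ε : M →ₗ[A] M}
    (h : LinearMap.ker p ≤ LinearMap.ker (p ∘ₗ ε)) : ∃ q : N →ₗ[A] N, q ∘ₗ p = p ∘ₗ ε := by
  let e := p.quotKerEquivOfSurjective hp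
  refine ⟨(LinearMap.ker p).liftQ (p ∘ₗ ε) h ∘ₗ e.symm.toLinearMap, ?_⟩
  ext x
  have he : e.symm (p x) = Submodule.Quotient.mk x := e.symm_apply_eq.2 rfl
  rw [LinearMap.comp_apply, LinearMap.comp_apply, LinearEquiv.coe_coe, he]
  rfl

theorem eq_zero_and_eq_zero_of_comp_eq_zero {L M N : Type*} [AddCommGroup L] [Module A L]
    [AddCommGroup M] [Module A M] [AddCommGroup N] [Module A N] {f : L →ₗ[A] M} {p : M →ₗ[A] N}
    (hf : IsSuperfluous (LinearMap.ker f)) (hp : IsSuperfluous (LinearMap.ker p))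
    {ε₀ : L →ₗ[A] L} {ε₁ : M →ₗ[A] M} (h₀ : ε₀ ∘ₗ ε₀ = ε₀) (h₁ : ε₁ ∘ₗ ε₁ = ε₁)
    (h : ε₁ ∘ₗ f = f ∘ₗ ε₀) (h_zero : p ∘ₗ ε₁ = 0) : ε₀ = 0 ∧ ε₁ = 0 := by
  have hε₁ : ε₁ = 0 := hp.eq_zero_of_range_le h₁ (LinearMap.range_le_ker_iff.2 h_zero)
  refine ⟨hf.eq_zero_of_range_le h₀ (LinearMap.range_le_ker_iff.2 ?_), hε₁⟩
  rw [← h, hε₁, LinearMap.zero_comp]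

theorem id_sub_comp_id_sub {M : Type*} [AddCommGroup M] [Module A M] {ε : M →ₗ[A] M}
    (h : ε ∘ₗ ε = ε) : (LinearMap.id - ε) ∘ₗ (LinearMap.id - ε) = LinearMap.id - ε :=
  IsIdempotentElem.one_sub (R := Module.End A M) h

theorem IsPresentation.idempotent_trivial {T : CochainComplex (ModuleCat.{u} A) ℤ}
    (hT : IsPresentation T) {ε₀ : T.X 0 →ₗ[A] T.X 0} {ε₁ : T.X 1 →ₗ[A] T.X 1}
    (h₀ : ε₀ ∘ₗ ε₀ = ε₀) (h₁ : ε₁ ∘ₗ ε₁ = ε₁)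
    (h : ε₁ ∘ₗ (T.d 0 1).hom = (T.d 0 1).hom ∘ₗ ε₀) :
    (ε₀ = 0 ∧ ε₁ = 0) ∨ (ε₀ = LinearMap.id ∧ ε₁ = LinearMap.id) := by
  obtain ⟨M, p, hM, -, -, hsurj, hker, hs₁, hs₀⟩ := hT
  have hp : p ∘ₗ (T.d 0 1).hom = 0 := LinearMap.range_le_ker_iff.1 hker.ge
  obtain ⟨q, hq⟩ := exists_comp_eq_comp_of_ker_le (p := p) (ε := ε₁) hsurj <| by
    rw [hker, LinearMap.range_le_ker_iff, LinearMap.comp_assoc, h, ← LinearMap.comp_assoc, hp,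
      LinearMap.zero_comp]
  have hqq : q ∘ₗ q = q := by
    rw [← LinearMap.cancel_right hsurj, LinearMap.comp_assoc, hq, ← LinearMap.comp_assoc, hq,
      LinearMap.comp_assoc, h₁]
  rcases eq_zero_or_eq_id_of_indecomposable hM q hqq with rfl | rfl
  · exact Or.inl (eq_zero_and_eq_zero_of_comp_eq_zero hs₀ hs₁ h₀ h₁ h
      (by rw [← hq, LinearMap.zero_comp]))
  · obtain ⟨h2, h3⟩ := eq_zero_and_eq_zero_of_comp_eq_zero hs₀ hs₁ (id_sub_comp_id_sub h₀)
      (id_sub_comp_id_sub h₁)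
      (by rw [LinearMap.sub_comp, LinearMap.comp_sub, h, LinearMap.id_comp, LinearMap.comp_id])
      (by rw [LinearMap.comp_sub, ← hq, LinearMap.id_comp, LinearMap.comp_id, sub_self])
    exact Or.inr ⟨(sub_eq_zero.1 h2).symm, (sub_eq_zero.1 h3).symm⟩

end Idempotent

/-! ### Matrices over the Peirce components -/

section Matrices

open Matrix

variable {V : Type v} {B : BrauerTree V} {K : Type u} [Field K] {I J L : Finset B.Edge}

namespace BrauerTree

theorem mem_proj_iff {i : B.Edge} {x : B.Alg K} : x ∈ B.proj K i ↔ x * B.idem K i = x := by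
  rw [proj, Submodule.mem_span_singleton]
  constructor
  · rintro ⟨a, rfl⟩
    rw [smul_eq_mul, mul_assoc, B.idem_mul_self]
  · intro h
    exact ⟨x, h⟩

variable (B K) in
/-- The idempotent `e_i` as the canonical generator of `A e_i`. -/
noncomputable def projGen (i : B.Edge) : B.proj K i :=
  ⟨B.idem K i, mem_proj_iff.2 (B.idem_mul_self i)⟩

theorem coe_smul_projGen {i : B.Edge} (y : B.proj K i) : (y : B.Alg K) • B.projGen K i = y :=
  Subtype.ext (mem_proj_iff.1 y.2)

/-- A matrix whose `(i, j)` entry lies in `e_i A e_j`. Such matrices encode the linear maps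
`⨁ A e_i → ⨁ A e_j`. -/
def IsPeirceMatrix (G : Matrix I J (B.Alg K)) : Prop :=
  ∀ i j, B.IsPeirce K i.1 j.1 (G i j)

theorem IsPeirceMatrix.zero : IsPeirceMatrix (0 : Matrix I J (B.Alg K)) :=
  fun i j => isPeirce_zero i.1 j.1

theorem IsPeirceMatrix.add {G H : Matrix I J (B.Alg K)} (hG : IsPeirceMatrix G)
    (hH : IsPeirceMatrix H) : IsPeirceMatrix (G + H) :=
  fun i j => (hG i j).add (hH i j)

theorem IsPeirceMatrix.mul {G : Matrix I J (B.Alg K)} {H : Matrix J L (B.Alg K)}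
    (hG : IsPeirceMatrix G) (hH : IsPeirceMatrix H) : IsPeirceMatrix (G * H) := by
  intro i l
  simp only [IsPeirce, Matrix.mul_apply, Finset.mul_sum, Finset.sum_mul]
  exact ⟨Finset.sum_congr rfl fun j _ => ((hG i j).mul (hH j l)).1,
    Finset.sum_congr rfl fun j _ => ((hG i j).mul (hH j l)).2⟩

/-- Right multiplication with `G`, as a map `⨁ A e_i → ⨁ A e_j` of left modules. -/
noncomputable def matMap (G : Matrix I J (B.Alg K)) (hG : IsPeirceMatrix G) :
    (∀ i : I, B.proj K i.1) →ₗ[B.Alg K] (∀ j : J, B.proj K j.1) where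
  toFun y j := ⟨((fun i => (y i : B.Alg K)) ᵥ* G) j, mem_proj_iff.2 <| by
    rw [Matrix.vecMul, dotProduct, Finset.sum_mul]
    exact Finset.sum_congr rfl fun i _ => by rw [mul_assoc, (hG i j).2]⟩
  map_add' y z := by
    ext j
    exact congrFun (Matrix.add_vecMul G _ _) j
  map_smul' a y := by
    ext j
    exact congrFun (Matrix.smul_vecMul a _ G) j

theorem coe_matMap_apply {G : Matrix I J (B.Alg K)} (hG : IsPeirceMatrix G)
    (y : ∀ i : I, B.proj K i.1) (j : J) :
    (matMap G hG y j : B.Alg K) = ((fun i => (y i : B.Alg K)) ᵥ* G) j := rfl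

open Classical in
theorem coe_matMap_single {G : Matrix I J (B.Alg K)} (hG : IsPeirceMatrix G) (i : I) (j : J)
    (y : B.proj K i.1) : (matMap G hG (Pi.single i y) j : B.Alg K) = y * G i j := by
  rw [coe_matMap_apply, Matrix.vecMul, dotProduct, Finset.sum_eq_single i]
  · rw [Pi.single_eq_same]
  · intro i' _ h
    rw [Pi.single_eq_of_ne h, ZeroMemClass.coe_zero, zero_mul]
  · simp

theorem matMap_comp {G : Matrix I J (B.Alg K)} {H : Matrix J L (B.Alg K)} (hG : IsPeirceMatrix G)
    (hH : IsPeirceMatrix H) : matMap H hH ∘ₗ matMap G hG = matMap (G * H) (hG.mul hH) := by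
  ext y l
  exact congrFun (Matrix.vecMul_vecMul _ G H) l

theorem matMap_zero : matMap (0 : Matrix I J (B.Alg K)) IsPeirceMatrix.zero = 0 := by
  ext y j
  exact congrFun (Matrix.vecMul_zero _) j

theorem matMap_inj {G H : Matrix I J (B.Alg K)} (hG : IsPeirceMatrix G) (hH : IsPeirceMatrix H) :
    matMap G hG = matMap H hH ↔ G = H := by
  classical
  constructor
  · intro h
    ext i j
    rw [← (hG i j).1, ← (hH i j).1]
    change (B.projGen K i.1 : B.Alg K) * _ = (B.projGen K i.1 : B.Alg K) * _
    rw [← coe_matMap_single hG, ← coe_matMap_single hH, h]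
  · rintro rfl
    rfl

theorem matMap_eq_zero_iff {G : Matrix I J (B.Alg K)} (hG : IsPeirceMatrix G) :
    matMap G hG = 0 ↔ G = 0 := by
  rw [← matMap_zero, matMap_inj]

open Classical in
/-- The matrix of a linear map, obtained by evaluating at the canonical generators. -/
noncomputable def matrixOf (f : (∀ i : I, B.proj K i.1) →ₗ[B.Alg K] (∀ j : J, B.proj K j.1)) :
    Matrix I J (B.Alg K) :=
  fun i j => f (Pi.single i (B.projGen K i.1)) j

theorem isPeirceMatrix_matrixOf
    (f : (∀ i : I, B.proj K i.1) →ₗ[B.Alg K] (∀ j : J, B.proj K j.1)) :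
    IsPeirceMatrix (matrixOf f) := by
  classical
  intro i j
  refine ⟨?_, mem_proj_iff.1 (Subtype.property _)⟩
  have h_gen : B.idem K i.1 • (Pi.single i (B.projGen K i.1) : ∀ i : I, B.proj K i.1) =
      Pi.single i (B.projGen K i.1) := by
    rw [← Pi.single_smul]
    exact congrArg _ (coe_smul_projGen (B.projGen K i.1))
  have h_map := congrArg (fun z => ((f z) j : B.Alg K)) h_gen
  simp only [map_smul, Pi.smul_apply, Submodule.coe_smul, smul_eq_mul] at h_map
  unfold matrixOf
  convert h_map

theorem matMap_matrixOf (f : (∀ i : I, B.proj K i.1) →ₗ[B.Alg K] (∀ j : J, B.proj K j.1)) :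
    matMap (matrixOf f) (isPeirceMatrix_matrixOf f) = f := by
  classical
  refine LinearMap.pi_ext fun i y => ?_
  ext j
  have hy : (Pi.single i y : ∀ i : I, B.proj K i.1) =
      (y : B.Alg K) • Pi.single i (B.projGen K i.1) := by
    rw [← Pi.single_smul, coe_smul_projGen]
  rw [coe_matMap_single, hy, map_smul, Pi.smul_apply, Submodule.coe_smul, smul_eq_mul]
  unfold matrixOf
  congr!

theorem forall_linearMap_iff
    {P : ((∀ i : I, B.proj K i.1) →ₗ[B.Alg K] (∀ j : J, B.proj K j.1)) → Prop} :
    (∀ f, P f) ↔ ∀ G hG, P (matMap G hG) :=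
  ⟨fun h G hG => h (matMap G hG), fun h f => matMap_matrixOf f ▸ h _ (isPeirceMatrix_matrixOf f)⟩

open Classical in
variable (K I) in
/-- The diagonal matrix with entry `e_i` for `i ∈ S` and `0` otherwise: the projection of
`⨁ A e_i` onto the summands in `S`. For `S = univ` it is the identity of `⨁ A e_i`. -/
noncomputable def idemMatrix (S : Set B.Edge) : Matrix I I (B.Alg K) :=
  Matrix.diagonal fun i => S.indicator (B.idem K) i.1

theorem isPeirceMatrix_idemMatrix (S : Set B.Edge) : IsPeirceMatrix (idemMatrix K I S) := by
  classical
  intro i i'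
  rw [idemMatrix, Matrix.diagonal_apply, Set.indicator]
  split_ifs with hi hS
  · rw [hi]
    exact isPeirce_idem _
  · exact isPeirce_zero _ _
  · exact isPeirce_zero _ _

open Classical in
theorem idemMatrix_mul_apply (S : Set B.Edge) {X : Matrix I J (B.Alg K)} (hX : IsPeirceMatrix X)
    (i : I) (j : J) : (idemMatrix K I S * X) i j = if i.1 ∈ S then X i j else 0 := by
  rw [idemMatrix, Matrix.diagonal_mul, Set.indicator, ite_mul, zero_mul, (hX i j).1]

open Classical in
theorem mul_idemMatrix_apply (S : Set B.Edge) {X : Matrix I J (B.Alg K)} (hX : IsPeirceMatrix X)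
    (i : I) (j : J) : (X * idemMatrix K J S) i j = if j.1 ∈ S then X i j else 0 := by
  rw [idemMatrix, Matrix.mul_diagonal, Set.indicator, mul_ite, mul_zero, (hX i j).2]

theorem idemMatrix_univ_mul {X : Matrix I J (B.Alg K)} (hX : IsPeirceMatrix X) :
    idemMatrix K I Set.univ * X = X := by
  classical
  ext i j
  rw [idemMatrix_mul_apply _ hX, if_pos (Set.mem_univ _)]

theorem mul_idemMatrix_univ {X : Matrix I J (B.Alg K)} (hX : IsPeirceMatrix X) :
    X * idemMatrix K J Set.univ = X := by
  classical
  ext i j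
  rw [mul_idemMatrix_apply _ hX, if_pos (Set.mem_univ _)]

theorem idemMatrix_mul_self (S : Set B.Edge) :
    idemMatrix K I S * idemMatrix K I S = idemMatrix K I S := by
  classical
  rw [idemMatrix, Matrix.diagonal_mul_diagonal]
  congr 1
  ext i
  rw [Set.indicator]
  split_ifs
  · exact B.idem_mul_self _
  · exact mul_zero _

theorem matMap_idemMatrix_univ :
    matMap (idemMatrix K I Set.univ) (isPeirceMatrix_idemMatrix _) = LinearMap.id := by
  classical
  refine LinearMap.pi_ext fun i y => ?_
  ext i'
  rw [coe_matMap_single, idemMatrix, Matrix.diagonal_apply, Set.indicator_univ, LinearMap.id_apply]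
  split_ifs with h
  · subst h
    rw [Pi.single_eq_same]
    exact mem_proj_iff.1 y.2
  · rw [Pi.single_eq_of_ne' h, mul_zero]
    rfl

variable [Finite V]

theorem idemMatrix_eq_zero_iff {S : Set B.Edge} : idemMatrix K I S = 0 ↔ ∀ i ∈ I, i ∉ S := by
  classical
  rw [idemMatrix, Matrix.diagonal_eq_zero, funext_iff, Subtype.forall]
  exact forall₂_congr fun i _ => by simp [Set.indicator_apply, B.idem_ne_zero]

theorem idemMatrix_eq_univ_iff {S : Set B.Edge} :
    idemMatrix K I S = idemMatrix K I Set.univ ↔ ∀ i ∈ I, i ∈ S := by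
  classical
  rw [idemMatrix, idemMatrix, Matrix.diagonal_eq_diagonal_iff, Subtype.forall]
  exact forall₂_congr fun i _ => by simp [Set.indicator_apply, (B.idem_ne_zero i).symm]

end BrauerTree

namespace TermDecomposition

open BrauerTree

variable {T : CochainComplex (ModuleCat.{max u v} (B.Alg K)) ℤ} (D : TermDecomposition B K T)

/-- The differential `T^0 → T^1` as a map between the direct sums. -/
noncomputable def diff : (∀ i : D.I, B.proj K i.1) →ₗ[B.Alg K] (∀ j : D.J, B.proj K j.1) :=
  D.equiv₁.toLinearMap ∘ₗ (T.d 0 1).hom ∘ₗ D.equiv₀.symm.toLinearMap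

/-- The matrix of the differential `T^0 → T^1`. -/
noncomputable def entry : Matrix D.I D.J (B.Alg K) := matrixOf D.diff

theorem isPeirceMatrix_entry : IsPeirceMatrix D.entry := isPeirceMatrix_matrixOf _

theorem matMap_entry : matMap D.entry D.isPeirceMatrix_entry = D.diff := matMap_matrixOf _

theorem coe_component_apply (i : D.I) (j : D.J) (y : B.proj K i.1) :
    (D.component i j y : B.Alg K) = y * D.entry i j := by
  classical
  have h_diff : D.component i j y = D.diff (Pi.single i y) j := by
    simp only [component, diff, LinearMap.comp_apply, LinearMap.proj_apply, LinearMap.coe_single]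
  rw [h_diff, ← matMap_entry, coe_matMap_single]

theorem component_ne_zero_iff (i : D.I) (j : D.J) : D.component i j ≠ 0 ↔ D.entry i j ≠ 0 := by
  refine not_congr ⟨fun h => ?_, fun h => ?_⟩
  · have h_gen := D.coe_component_apply i j (B.projGen K i.1)
    rw [h] at h_gen
    rw [← (D.isPeirceMatrix_entry i j).1]
    exact h_gen.symm
  · ext y
    rw [coe_component_apply, h, mul_zero]
    rfl

end TermDecomposition

end Matrices

/-! ### The matrix of the differential -/

section Superfluous

variable {A : Type u} [Ring A]

theorem IsSuperfluous.eq_zero_of_map_eq_range {M P : Type*} [AddCommGroup M] [Module A M]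
    [AddCommGroup P] [Module A P] {N : Submodule A M} (hN : IsSuperfluous N) {g : M →ₗ[A] P}
    (hg : N.map g = LinearMap.range g) : g = 0 := by
  refine LinearMap.ker_eq_top.1 (hN _ ?_)
  rw [← Submodule.comap_map_eq, hg]
  exact Submodule.eq_top_iff'.2 fun x => ⟨x, rfl⟩

theorem IsPresentation.isSuperfluous_range {T : CochainComplex (ModuleCat.{u} A) ℤ}
    (hT : IsPresentation T) : IsSuperfluous (LinearMap.range (T.d 0 1).hom) := by
  obtain ⟨M, p, -, -, -, -, hker, hs, -⟩ := hT
  exact hker ▸ hs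

theorem IsPresentation.nontrivial_zero {T : CochainComplex (ModuleCat.{u} A) ℤ}
    (hT : IsPresentation T) (h_proj : Module.Projective A (T.X 1)) : Nontrivial (T.X 0) := by
  obtain ⟨M, p, -, hM, -, hsurj, hker, -, -⟩ := hT
  by_contra h
  rw [not_nontrivial_iff_subsingleton] at h
  rw [Subsingleton.elim (T.d 0 1).hom 0, LinearMap.range_zero] at hker
  exact hM (.of_equiv (LinearEquiv.ofBijective p ⟨LinearMap.ker_eq_bot.1 hker, hsurj⟩))

theorem IsPresentation.nontrivial_one {T : CochainComplex (ModuleCat.{u} A) ℤ}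
    (hT : IsPresentation T) : Nontrivial (T.X 1) := by
  obtain ⟨M, p, hM, -, -, hsurj, -, -, -⟩ := hT
  by_contra h
  rw [not_nontrivial_iff_subsingleton] at h
  have := hsurj.subsingleton
  exact hM.1 (ModuleCat.isZero_of_subsingleton M)

end Superfluous

section Transfer

open BrauerTree

variable {V : Type v} {B : BrauerTree V} {K : Type u} [Field K]
  {S T : CochainComplex (ModuleCat.{max u v} (B.Alg K)) ℤ}

theorem IsPresentation.diff_idempotent_trivial (hT : IsPresentation T)
    (D : TermDecomposition B K T) {ε₀ : Module.End (B.Alg K) (∀ i : D.I, B.proj K i.1)}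
    {ε₁ : Module.End (B.Alg K) (∀ j : D.J, B.proj K j.1)} (h₀ : ε₀ ∘ₗ ε₀ = ε₀)
    (h₁ : ε₁ ∘ₗ ε₁ = ε₁) (h : ε₁ ∘ₗ D.diff = D.diff ∘ₗ ε₀) :
    (ε₀ = 0 ∧ ε₁ = 0) ∨ (ε₀ = LinearMap.id ∧ ε₁ = LinearMap.id) := by
  let φ₀ := D.equiv₀.symm.conjRingEquiv
  let φ₁ := D.equiv₁.symm.conjRingEquiv
  have h_comm : φ₁ ε₁ ∘ₗ (T.d 0 1).hom = (T.d 0 1).hom ∘ₗ φ₀ ε₀ := by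
    ext x
    have hx := LinearMap.congr_fun h (D.equiv₀ x)
    simp only [TermDecomposition.diff, LinearMap.comp_apply, LinearEquiv.coe_coe,
      LinearEquiv.symm_apply_apply] at hx
    exact (LinearEquiv.symm_apply_eq _).2 hx
  have key := hT.idempotent_trivial ((map_mul φ₀ ε₀ ε₀).symm.trans (congrArg φ₀ h₀))
    ((map_mul φ₁ ε₁ ε₁).symm.trans (congrArg φ₁ h₁)) h_comm
  exact key.imp (And.imp φ₀.map_eq_zero_iff.1 φ₁.map_eq_zero_iff.1)
    (And.imp φ₀.map_eq_one_iff.1 φ₁.map_eq_one_iff.1)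

theorem IsPresentation.entry_idempotent_trivial (hT : IsPresentation T)
    (D : TermDecomposition B K T) {E₀ : Matrix D.I D.I (B.Alg K)} {E₁ : Matrix D.J D.J (B.Alg K)}
    (hE₀ : IsPeirceMatrix E₀) (hE₁ : IsPeirceMatrix E₁) (h₀ : E₀ * E₀ = E₀) (h₁ : E₁ * E₁ = E₁)
    (h : E₀ * D.entry = D.entry * E₁) :
    (E₀ = 0 ∧ E₁ = 0) ∨
      (E₀ = idemMatrix K D.I Set.univ ∧ E₁ = idemMatrix K D.J Set.univ) := by
  have key := hT.diff_idempotent_trivial D (ε₀ := matMap E₀ hE₀) (ε₁ := matMap E₁ hE₁)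
  rw [← D.matMap_entry, ← matMap_idemMatrix_univ, ← matMap_idemMatrix_univ] at key
  simp only [matMap_comp, matMap_inj, matMap_eq_zero_iff] at key
  exact key h₀ h₁ h.symm

theorem homVanishes_iff_matrix [HasDerivedCategory.{w} (ModuleCat.{max u v} (B.Alg K))]
    (hS : IsIndecTwoTermPartialTilting S) (hT : IsIndecTwoTermPartialTilting T)
    (DS : TermDecomposition B K S) (DT : TermDecomposition B K T) :
    HomVanishes S T (-1) ↔ ∀ G : Matrix DS.J DT.I (B.Alg K), IsPeirceMatrix G →
      DS.entry * G = 0 → G * DT.entry = 0 → G = 0 := by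
  have := hS.isKProjective
  have := hS.isStrictlyLE
  have := hT.isStrictlyGE
  let φ : (S.X 1 →ₗ[B.Alg K] T.X 0) ≃+
      ((∀ j : DS.J, B.proj K j.1) →ₗ[B.Alg K] (∀ i : DT.I, B.proj K i.1)) :=
    LinearEquiv.arrowCongrAddEquiv DS.equiv₁ DT.equiv₀
  have h_left : ∀ g : S.X 1 →ₗ[B.Alg K] T.X 0,
      φ g ∘ₗ DS.diff = 0 ↔ g ∘ₗ (S.d 0 1).hom = 0 := fun g => by
    rw [← EmbeddingLike.map_eq_zero_iff (f := LinearEquiv.arrowCongrAddEquiv DS.equiv₀ DT.equiv₀)]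
    refine Eq.congr_left (LinearMap.ext fun x => ?_)
    simp [φ, TermDecomposition.diff]
  have h_right : ∀ g : S.X 1 →ₗ[B.Alg K] T.X 0,
      DT.diff ∘ₗ φ g = 0 ↔ (T.d 0 1).hom ∘ₗ g = 0 := fun g => by
    rw [← EmbeddingLike.map_eq_zero_iff (f := LinearEquiv.arrowCongrAddEquiv DS.equiv₁ DT.equiv₁)]
    refine Eq.congr_left (LinearMap.ext fun x => ?_)
    simp [φ, TermDecomposition.diff]
  calc HomVanishes S T (-1)
      ↔ ∀ g : S.X 1 →ₗ[B.Alg K] T.X 0, φ g ∘ₗ DS.diff = 0 → DT.diff ∘ₗ φ g = 0 → φ g = 0 := by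
        simp only [homVanishes_neg_one_iff, h_left, h_right, EmbeddingLike.map_eq_zero_iff]
    _ ↔ ∀ f : (∀ j : DS.J, B.proj K j.1) →ₗ[B.Alg K] (∀ i : DT.I, B.proj K i.1),
          f ∘ₗ DS.diff = 0 → DT.diff ∘ₗ f = 0 → f = 0 :=
        φ.toEquiv.forall_congr_right
          (q := fun f => f ∘ₗ DS.diff = 0 → DT.diff ∘ₗ f = 0 → f = 0)
    _ ↔ _ := by
        rw [forall_linearMap_iff, ← DS.matMap_entry, ← DT.matMap_entry]
        simp only [matMap_comp, matMap_eq_zero_iff]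

section Radical

variable [Finite V]

theorem exists_mul_eq_idem {d : B.Arrow} {c : K} (hc : c ≠ 0) (c' : K) :
    ∃ b, b * (c • B.idem K (B.src d) + c' • B.pathElt K d (B.cycleLength d)) =
      B.idem K (B.src d) := by
  set e := B.idem K (B.src d)
  set s := B.pathElt K d (B.cycleLength d)
  have hee : e * e = e := B.idem_mul_self _
  have hes : e * s = s := (isPeirce_pathElt_cycleLength d).1
  have hse : s * e = s := (isPeirce_pathElt_cycleLength d).2
  have hss : s * s = 0 := B.pathElt_cycleLength_mul_pathElt d d (B.cycleLength_pos d)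
  refine ⟨c⁻¹ • e - (c⁻¹ * c⁻¹ * c') • s, ?_⟩
  simp only [sub_mul, mul_add, smul_mul_assoc, mul_smul_comm, hee, hes, hse, hss]
  match_scalars <;> field_simp
  ring

theorem IsPresentation.mul_entry_ne_idem (hT : IsPresentation T) (D : TermDecomposition B K T)
    (i : D.I) (j : D.J) (b : B.Alg K) : b * D.entry i j ≠ B.idem K j.1 := by
  classical
  intro hb
  let g : T.X 1 →ₗ[B.Alg K] B.proj K j.1 := LinearMap.proj j ∘ₗ D.equiv₁.toLinearMap
  have hg : g = 0 := by
    refine hT.isSuperfluous_range.eq_zero_of_map_eq_range (le_antisymm (LinearMap.map_le_range) ?_)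
    rintro _ ⟨x, rfl⟩
    let z : ∀ i : D.I, B.proj K i.1 := ((g x : B.Alg K) * b) • Pi.single i (B.projGen K i.1)
    refine ⟨_, ⟨D.equiv₀.symm z, rfl⟩, Subtype.ext ?_⟩
    change (D.diff z j : B.Alg K) = g x
    rw [← D.matMap_entry, map_smul, Pi.smul_apply, Submodule.coe_smul, coe_matMap_single, projGen,
      (D.isPeirceMatrix_entry i j).1, smul_eq_mul, mul_assoc, hb, mem_proj_iff.1 (g x).2]
  have h_gen := LinearMap.congr_fun hg (D.equiv₁.symm (Pi.single j (B.projGen K j.1)))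
  refine B.idem_ne_zero (K := K) j.1 (congrArg Subtype.val (?_ : B.projGen K j.1 = 0))
  simpa [g] using h_gen

/-- The component `A e_i → A e_j` is not an isomorphism, so it lies in the radical. -/
theorem IsPresentation.exists_entry_eq_smul_pathElt (hT : IsPresentation T)
    (D : TermDecomposition B K T) (i : D.I) (j : D.J) :
    ∃ (c : K) (d : B.Arrow) (m : ℕ), 0 < m ∧ D.entry i j = c • B.pathElt K d m := by
  obtain ⟨d, hd⟩ := B.exists_src_eq i.1
  by_cases hij : i.1 = j.1
  · obtain ⟨c, c', hc⟩ : ∃ c c' : K, D.entry i j =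
        c • B.idem K (B.src d) + c' • B.pathElt K d (B.cycleLength d) := by
      have h := D.isPeirceMatrix_entry i j
      rw [← hij, ← hd] at h
      exact h.exists_eq_add
    obtain rfl : c = 0 := by
      by_contra h0
      obtain ⟨b, hb⟩ := exists_mul_eq_idem (d := d) h0 c'
      rw [← hc, hd, hij] at hb
      exact hT.mul_entry_ne_idem D i j b hb
    exact ⟨c', d, _, B.cycleLength_pos d, by rw [hc, zero_smul, zero_add]⟩
  · by_cases h0 : D.entry i j = 0
    · exact ⟨0, d, 1, one_pos, by rw [h0, zero_smul]⟩
    · obtain ⟨a, a', c, -, -, hf, hne, -, hc⟩ :=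
        (D.isPeirceMatrix_entry i j).exists_of_ne_zero hij h0
      exact ⟨c, a, _, B.dist_pos hf hne, hc⟩

theorem IsPresentation.pathElt_cycleLength_mul_entry (hT : IsPresentation T)
    (D : TermDecomposition B K T) (d : B.Arrow) (i : D.I) (j : D.J) :
    B.pathElt K d (B.cycleLength d) * D.entry i j = 0 := by
  obtain ⟨c, d', m, hm, h⟩ := hT.exists_entry_eq_smul_pathElt D i j
  rw [h, mul_smul_comm, B.pathElt_cycleLength_mul_pathElt _ _ hm, smul_zero]

theorem IsPresentation.entry_mul_pathElt_cycleLength (hT : IsPresentation T)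
    (D : TermDecomposition B K T) (d : B.Arrow) (i : D.I) (j : D.J) :
    D.entry i j * B.pathElt K d (B.cycleLength d) = 0 := by
  obtain ⟨c, d', m, hm, h⟩ := hT.exists_entry_eq_smul_pathElt D i j
  rw [h, smul_mul_assoc, B.pathElt_mul_pathElt_cycleLength _ _ hm, smul_zero]

end Radical

variable [HasDerivedCategory.{w} (ModuleCat.{max u v} (B.Alg K))]

theorem not_homVanishes_of_isPeirce (hS : IsIndecTwoTermPartialTilting S)
    (hT : IsIndecTwoTermPartialTilting T) (DS : TermDecomposition B K S)
    (DT : TermDecomposition B K T) {j : DS.J} {i : DT.I} {x : B.Alg K}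
    (hx : B.IsPeirce K j.1 i.1 x) (hx_ne : x ≠ 0) (hSx : ∀ i', DS.entry i' j * x = 0)
    (hxT : ∀ j', x * DT.entry i j' = 0) : ¬ HomVanishes S T (-1) := by
  classical
  rw [homVanishes_iff_matrix hS hT DS DT]
  intro H
  have hG : IsPeirceMatrix (Matrix.single j i x) := by
    intro j' i'
    rw [Matrix.single_apply]
    split_ifs with h
    · exact h.1 ▸ h.2 ▸ hx
    · exact isPeirce_zero _ _
  have hSG : DS.entry * Matrix.single j i x = 0 := by
    ext i' i''
    simp only [Matrix.mul_apply, Matrix.single_apply, mul_ite, mul_zero, Matrix.zero_apply]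
    exact Finset.sum_eq_zero fun j' _ => ite_eq_right_iff.2 fun h => h.1 ▸ hSx i'
  have hGT : Matrix.single j i x * DT.entry = 0 := by
    ext j' j''
    simp only [Matrix.mul_apply, Matrix.single_apply, ite_mul, zero_mul, Matrix.zero_apply]
    exact Finset.sum_eq_zero fun i' _ => ite_eq_right_iff.2 fun h => h.2 ▸ hxT j''
  refine hx_ne ?_
  rw [← Matrix.single_apply_same j i x, H _ hG hSG hGT, Matrix.zero_apply]

variable [Finite V]

theorem not_homVanishes_of_mem (hS : IsIndecTwoTermPartialTilting S)
    (hT : IsIndecTwoTermPartialTilting T) (hpS : IsPresentation S) (hpT : IsPresentation T)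
    (DS : TermDecomposition B K S) (DT : TermDecomposition B K T) {k : B.Edge}
    (hj : k ∈ DS.J) (hi : k ∈ DT.I) : ¬ HomVanishes S T (-1) := by
  obtain ⟨d, rfl⟩ := B.exists_src_eq k
  exact not_homVanishes_of_isPeirce hS hT DS DT (j := ⟨_, hj⟩) (i := ⟨_, hi⟩)
    (isPeirce_pathElt_cycleLength d) (B.pathElt_cycleLength_ne_zero d)
    (fun i' => hpS.entry_mul_pathElt_cycleLength DS d i' _)
    fun j' => hpT.pathElt_cycleLength_mul_entry DT d _ j'

variable (B K) in
/-- The properties of the matrix of the differential that determine the shape of the diagram.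
The last one says that the complex `⨁ A e_i → ⨁ A e_j` given by the matrix is indecomposable. -/
structure IsStringMatrix {I J : Finset B.Edge} (F : Matrix I J (B.Alg K)) : Prop where
  peirce : IsPeirceMatrix F
  disjoint : ∀ x ∈ I, x ∉ J
  nonempty_left : I.Nonempty
  nonempty_right : J.Nonempty
  idempotent_trivial : ∀ {E₀ : Matrix I I (B.Alg K)} {E₁ : Matrix J J (B.Alg K)},
    IsPeirceMatrix E₀ → IsPeirceMatrix E₁ → E₀ * E₀ = E₀ → E₁ * E₁ = E₁ → E₀ * F = F * E₁ →
    (E₀ = 0 ∧ E₁ = 0) ∨ (E₀ = idemMatrix K I Set.univ ∧ E₁ = idemMatrix K J Set.univ)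

theorem isStringMatrix_entry (hT : IsIndecTwoTermPartialTilting T) (hp : IsPresentation T)
    (D : TermDecomposition B K T) : IsStringMatrix B K D.entry where
  peirce := D.isPeirceMatrix_entry
  disjoint _ hi hj := not_homVanishes_of_mem hT hT hp hp D D hj hi (hT.homVanishes _ (by norm_num))
  nonempty_left := by
    have := hp.nontrivial_zero (hT.projective 1)
    by_contra h
    have : IsEmpty D.I := Finset.isEmpty_coe_sort.2 (Finset.not_nonempty_iff_eq_empty.1 h)
    exact not_subsingleton (T.X 0) D.equiv₀.toEquiv.subsingleton
  nonempty_right := by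
    have := hp.nontrivial_one
    by_contra h
    have : IsEmpty D.J := Finset.isEmpty_coe_sort.2 (Finset.not_nonempty_iff_eq_empty.1 h)
    exact not_subsingleton (T.X 1) D.equiv₁.toEquiv.subsingleton
  idempotent_trivial := hp.entry_idempotent_trivial D

end Transfer

/-! ### String matrices -/

theorem add_mul_add_self_of_mul_self_eq_zero {R : Type*} [NonUnitalNonAssocSemiring R] {e n : R}
    (he : e * e = e) (hn : n * n = 0) (h : e * n + n * e = n) : (e + n) * (e + n) = e + n := by
  rw [mul_add, add_mul, add_mul, he, hn, add_zero, add_assoc, add_comm (n * e), h]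

section StringMatrix

open BrauerTree

variable {V : Type v} {B : BrauerTree V} {K : Type u} [Field K] {I J : Finset B.Edge}
  {F : Matrix I J (B.Alg K)}

namespace IsStringMatrix

/-- The differential with matrix `F` has a nonzero component from the edge of `p` to the edge
of `q`. -/
def Linked (F : Matrix I J (B.Alg K)) (p q : B.Arrow) : Prop :=
  ∃ (hp : B.src p ∈ I) (hq : B.src q ∈ J), F ⟨B.src p, hp⟩ ⟨B.src q, hq⟩ ≠ 0

theorem linked_of_ne_zero {i : I} {j : J} {p q : B.Arrow} (hp : B.src p = i.1)
    (hq : B.src q = j.1) (h : F i j ≠ 0) : Linked F p q :=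
  ⟨hp ▸ i.2, hq ▸ j.2, by simpa only [hp, hq] using h⟩

theorem ne_of_linked (hF : IsStringMatrix B K F) {p q : B.Arrow} (h : Linked F p q) : p ≠ q := by
  rintro rfl
  exact hF.disjoint _ h.1 h.2.1

theorem fst_ne_of_mem_right {p q : B.Arrow} {j : J} (hF : IsStringMatrix B K F)
    (hpq : p.fst = q.fst) (hl : Linked F p q) (hj : j.1 ∈ B.branch p ∪ B.branch q)
    (hjq : j.1 ≠ B.src q) {d : B.Arrow} (hd : B.src d = j.1) : d.fst ≠ p.fst := fun h => by
  rw [← hd] at hj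
  rcases hj with hj | hj
  · exact hF.disjoint _ hl.1 (B.eq_of_src_mem_branch h hj ▸ hd ▸ j.2)
  · exact hjq (B.eq_of_src_mem_branch (h.trans hpq) hj ▸ hd.symm)

theorem fst_ne_of_mem_left {p q : B.Arrow} {i : I} (hF : IsStringMatrix B K F)
    (hpq : p.fst = q.fst) (hl : Linked F p q) (hi : i.1 ∈ B.branch p ∪ B.branch q)
    (hip : i.1 ≠ B.src p) {d : B.Arrow} (hd : B.src d = i.1) : d.fst ≠ p.fst := fun h => by
  rw [← hd] at hi
  rcases hi with hi | hi
  · exact hip (B.eq_of_src_mem_branch h hi ▸ hd.symm)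
  · exact hF.disjoint _ i.2 (hd ▸ B.eq_of_src_mem_branch (h.trans hpq) hi ▸ hl.2.1)

variable [Finite V]

/-- The hypothesis on the products says that, after conjugation with `1 ± N₀` and `1 ± N₁`, the
matrix has no entries between `S` and its complement. -/
theorem all_or_none_of_perturbation (hF : IsStringMatrix B K F) {S : Set B.Edge}
    {N₀ : Matrix I I (B.Alg K)} {N₁ : Matrix J J (B.Alg K)} (hN₀ : IsPeirceMatrix N₀)
    (hN₁ : IsPeirceMatrix N₁) (hD₀ : idemMatrix K I S * N₀ = 0) (hD₀' : N₀ * idemMatrix K I S = N₀)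
    (hD₁ : idemMatrix K J S * N₁ = N₁) (hD₁' : N₁ * idemMatrix K J S = 0)
    (h : (idemMatrix K I S + N₀) * F = F * (idemMatrix K J S + N₁)) :
    ((∀ x ∈ I, x ∉ S) ∧ ∀ x ∈ J, x ∉ S) ∨ ((∀ x ∈ I, x ∈ S) ∧ ∀ x ∈ J, x ∈ S) := by
  have hE₀ : IsPeirceMatrix (idemMatrix K I S + N₀) := (isPeirceMatrix_idemMatrix S).add hN₀
  have hE₁ : IsPeirceMatrix (idemMatrix K J S + N₁) := (isPeirceMatrix_idemMatrix S).add hN₁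
  have hNN₀ : N₀ * N₀ = 0 := by rw [← hD₀', Matrix.mul_assoc, ← Matrix.mul_assoc _ N₀, hD₀,
    Matrix.zero_mul, Matrix.mul_zero]
  have hNN₁ : N₁ * N₁ = 0 := by rw [← hD₁, Matrix.mul_assoc, ← Matrix.mul_assoc N₁, hD₁',
    Matrix.zero_mul, Matrix.mul_zero]
  have hl₀ : idemMatrix K I S * (idemMatrix K I S + N₀) = idemMatrix K I S := by
    rw [mul_add, idemMatrix_mul_self, hD₀, add_zero]
  have hr₀ : (idemMatrix K I S + N₀) * idemMatrix K I S = idemMatrix K I S + N₀ := by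
    rw [add_mul, idemMatrix_mul_self, hD₀']
  have hl₁ : idemMatrix K J S * (idemMatrix K J S + N₁) = idemMatrix K J S + N₁ := by
    rw [mul_add, idemMatrix_mul_self, hD₁]
  have hr₁ : (idemMatrix K J S + N₁) * idemMatrix K J S = idemMatrix K J S := by
    rw [add_mul, idemMatrix_mul_self, hD₁', add_zero]
  have h_idem₀ := add_mul_add_self_of_mul_self_eq_zero (idemMatrix_mul_self S) hNN₀
    (by rw [hD₀, hD₀', zero_add])
  have h_idem₁ := add_mul_add_self_of_mul_self_eq_zero (idemMatrix_mul_self S) hNN₁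
    (by rw [hD₁, hD₁', add_zero])
  simp_rw [← idemMatrix_eq_zero_iff (K := K), ← idemMatrix_eq_univ_iff (K := K)]
  refine (hF.idempotent_trivial hE₀ hE₁ h_idem₀ h_idem₁ h).imp ?_ ?_ <;> rintro ⟨h₀, h₁⟩
  · exact ⟨by rw [← hl₀, h₀, mul_zero], by rw [← hr₁, h₁, zero_mul]⟩
  · rw [h₀, idemMatrix_univ_mul (isPeirceMatrix_idemMatrix S)] at hr₀
    rw [h₁, mul_idemMatrix_univ (isPeirceMatrix_idemMatrix S)] at hl₁
    exact ⟨hr₀, hl₁⟩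

/-- The diagram is connected. -/
theorem all_or_none (hF : IsStringMatrix B K F) (S : Set B.Edge)
    (h : ∀ i j, F i j ≠ 0 → (i.1 ∈ S ↔ j.1 ∈ S)) :
    ((∀ x ∈ I, x ∉ S) ∧ ∀ x ∈ J, x ∉ S) ∨ ((∀ x ∈ I, x ∈ S) ∧ ∀ x ∈ J, x ∈ S) := by
  classical
  refine hF.all_or_none_of_perturbation IsPeirceMatrix.zero IsPeirceMatrix.zero
    (mul_zero _) (zero_mul _) (mul_zero _) (zero_mul _) ?_
  ext i j
  rw [add_zero, add_zero, idemMatrix_mul_apply S hF.peirce, mul_idemMatrix_apply S hF.peirce]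
  by_cases h0 : F i j = 0
  · rw [h0, ite_self, ite_self]
  · simp only [h i j h0]

open Classical in
/-- Row operations with the row of `p` clear the entries that leave `S` on the left, column
operations with the column of `q` clear those that leave `S` on the right. -/
theorem all_mem_of_elimination (hF : IsStringMatrix B K F) {S : Set B.Edge} {p : I} {q : J}
    (hp : p.1 ∈ S) (hq : q.1 ∈ S) {ν : I → B.Alg K} {μ : J → B.Alg K}
    (hν : ∀ i : I, i.1 ∉ S → B.IsPeirce K i.1 p.1 (ν i))
    (hμ : ∀ j : J, j.1 ∉ S → B.IsPeirce K q.1 j.1 (μ j))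
    (hν_mul : ∀ i : I, i.1 ∉ S → ∀ j : J, j.1 ∈ S → ν i * F p j = F i j)
    (hμ_mul : ∀ j : J, j.1 ∉ S → ∀ i : I, i.1 ∈ S → F i q * μ j = F i j) :
    (∀ x ∈ I, x ∈ S) ∧ ∀ x ∈ J, x ∈ S := by
  let N₀ : Matrix I I (B.Alg K) := .of fun i i' => if i' = p then if i.1 ∈ S then 0 else ν i else 0
  let N₁ : Matrix J J (B.Alg K) := .of fun j j' => if j = q then if j'.1 ∈ S then 0 else μ j' else 0
  have hN₀ : IsPeirceMatrix N₀ := fun i i' => by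
    dsimp only [N₀, Matrix.of_apply]
    split_ifs with h hi
    exacts [isPeirce_zero _ _, h ▸ hν i hi, isPeirce_zero _ _]
  have hN₁ : IsPeirceMatrix N₁ := fun j j' => by
    dsimp only [N₁, Matrix.of_apply]
    split_ifs with h hj
    exacts [isPeirce_zero _ _, h ▸ hμ j' hj, isPeirce_zero _ _]
  have hNF : ∀ i j, (N₀ * F) i j = if i.1 ∈ S then 0 else ν i * F p j := fun i j => by
    simp [N₀, Matrix.mul_apply]
  have hFN : ∀ i j, (F * N₁) i j = if j.1 ∈ S then 0 else F i q * μ j := fun i j => by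
    simp [N₁, Matrix.mul_apply]
  refine (hF.all_or_none_of_perturbation hN₀ hN₁ ?_ ?_ ?_ ?_ ?_).resolve_left
    fun h => h.1 p.1 p.2 hp <;> ext i j
  · rw [idemMatrix_mul_apply S hN₀]
    simp +contextual [N₀]
  · rw [mul_idemMatrix_apply S hN₀]
    simp only [N₀, Matrix.of_apply]
    grind
  · rw [idemMatrix_mul_apply S hN₁]
    simp only [N₁, Matrix.of_apply]
    grind
  · rw [mul_idemMatrix_apply S hN₁]
    simp +contextual [N₁]
  · rw [Matrix.add_mul, Matrix.mul_add, Matrix.add_apply, Matrix.add_apply, hNF, hFN,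
      idemMatrix_mul_apply S hF.peirce, mul_idemMatrix_apply S hF.peirce]
    split_ifs with hi hj hj
    · rfl
    · rw [hμ_mul j hj i hi, add_zero, zero_add]
    · rw [hν_mul i hi j hj, add_zero, zero_add]
    · rw [← hμ_mul j hj p hp, ← hν_mul i hi q hq, mul_assoc]

theorem exists_of_ne_zero (hF : IsStringMatrix B K F) {i : I} {j : J} (h : F i j ≠ 0) :
    ∃ (d d' : B.Arrow) (c : K), B.src d = i.1 ∧ B.src d' = j.1 ∧ d.fst = d'.fst ∧ d ≠ d' ∧ c ≠ 0 ∧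
      F i j = c • B.arc K d d' :=
  (hF.peirce i j).exists_of_ne_zero (fun h => hF.disjoint i.1 i.2 (h ▸ j.2)) h

theorem mem_branch_iff_of_not_linked (hF : IsStringMatrix B K F) {a : B.Arrow}
    (h : ∀ p q : B.Arrow, p.fst = q.fst → Linked F p q → p ≠ a ∧ q ≠ a) (i : I) (j : J)
    (hij : F i j ≠ 0) : i.1 ∈ B.branch a ↔ j.1 ∈ B.branch a := by
  obtain ⟨d, d', -, hd, hd', hf, -⟩ := hF.exists_of_ne_zero hij
  obtain ⟨hda, hda'⟩ := h d d' hf (linked_of_ne_zero hd hd' hij)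
  rw [← hd, ← hd']
  refine ⟨fun hi => by_contra fun hj => hda ?_, fun hj => by_contra fun hi => hda' ?_⟩
  · exact B.eq_of_src_mem_branch_of_src_notMem hf hi hj
  · exact B.eq_of_src_mem_branch_of_src_notMem hf.symm hj hi

theorem mem_branch_of_not_linked (hF : IsStringMatrix B K F) {a : B.Arrow}
    (h : ∀ p q : B.Arrow, p.fst = q.fst → Linked F p q → p ≠ a ∧ q ≠ a) {x : B.Edge}
    (hx : x ∈ I ∨ x ∈ J) (hxa : x ∈ B.branch a) {y : B.Edge} (hy : y ∈ I ∨ y ∈ J) :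
    y ∈ B.branch a := by
  rcases hF.all_or_none (B.branch a) (hF.mem_branch_iff_of_not_linked h) with h | h
  · exact absurd hxa (hx.elim (h.1 x) (h.2 x))
  · exact hy.elim (h.1 y) (h.2 y)

section Nearest

variable {p q : B.Arrow} {i : I} {j : J}

theorem entry_eq_zero_of_mem_right (hF : IsStringMatrix B K F) (hpq : p.fst = q.fst)
    (hl : Linked F p q) (hi : i.1 ∉ B.branch p ∪ B.branch q)
    (hj : j.1 ∈ B.branch p ∪ B.branch q) (hjq : j.1 ≠ B.src q) : F i j = 0 := by
  by_contra h0
  obtain ⟨d, d', -, hd, hd', hf, -⟩ := hF.exists_of_ne_zero h0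
  exact hF.fst_ne_of_mem_right hpq hl hj hjq hd'
    (B.fst_eq_of_src_mem_branch_union hpq hf.symm (hd' ▸ hj) (hd ▸ hi))

theorem entry_eq_zero_of_mem_left (hF : IsStringMatrix B K F) (hpq : p.fst = q.fst)
    (hl : Linked F p q) (hi : i.1 ∈ B.branch p ∪ B.branch q) (hip : i.1 ≠ B.src p)
    (hj : j.1 ∉ B.branch p ∪ B.branch q) : F i j = 0 := by
  by_contra h0
  obtain ⟨d, d', -, hd, hd', hf, -⟩ := hF.exists_of_ne_zero h0
  exact hF.fst_ne_of_mem_left hpq hl hi hip hd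
    (B.fst_eq_of_src_mem_branch_union hpq hf (hd ▸ hi) (hd' ▸ hj))

theorem arc_mul_entry_eq_zero (hF : IsStringMatrix B K F) (hpq : p.fst = q.fst)
    (hl : Linked F p q) (hj : j.1 ∈ B.branch p ∪ B.branch q) (hjq : j.1 ≠ B.src q)
    {r : B.Arrow} (hr : r.fst = p.fst) (hne : r ≠ p) (i : I) : B.arc K r p * F i j = 0 := by
  by_cases h0 : F i j = 0
  · rw [h0, mul_zero]
  obtain ⟨d, d', c, -, hd', hf, hdd, -, hc⟩ := hF.exists_of_ne_zero h0
  have hd'p := hF.fst_ne_of_mem_right hpq hl hj hjq hd'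
  rw [hc, mul_smul_comm, B.arc_mul_arc_of_fst_ne hr hf hne hdd
    (fun h => hd'p (hf.symm.trans (h.symm.trans hr))), smul_zero]

theorem entry_mul_arc_eq_zero (hF : IsStringMatrix B K F) (hpq : p.fst = q.fst)
    (hl : Linked F p q) (hi : i.1 ∈ B.branch p ∪ B.branch q) (hip : i.1 ≠ B.src p)
    {r : B.Arrow} (hr : q.fst = r.fst) (hne : q ≠ r) (j : J) : F i j * B.arc K q r = 0 := by
  by_cases h0 : F i j = 0
  · rw [h0, zero_mul]
  obtain ⟨d, d', c, hd, -, hf, hdd, -, hc⟩ := hF.exists_of_ne_zero h0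
  have hdp := hF.fst_ne_of_mem_left hpq hl hi hip hd
  rw [hc, smul_mul_assoc, B.arc_mul_arc_of_fst_ne hf hr hdd hne
    (fun h => hdp (h.trans hpq.symm)), smul_zero]

theorem exists_entry_eq_smul_arc (hF : IsStringMatrix B K F) (hpq : p.fst = q.fst)
    (hl : Linked F p q) :
    ∃ c : K, c ≠ 0 ∧ F ⟨B.src p, hl.1⟩ ⟨B.src q, hl.2.1⟩ = c • B.arc K p q := by
  obtain ⟨c, hc⟩ := (hF.peirce ⟨B.src p, hl.1⟩ ⟨B.src q, hl.2.1⟩).exists_eq_smul_arc hpq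
    (hF.ne_of_linked hl)
  refine ⟨c, fun h0 => hl.2.2 ?_, hc⟩
  rw [hc, h0, zero_smul]

theorem exists_mul_eq_of_notMem_left (hF : IsStringMatrix B K F) (hpq : p.fst = q.fst)
    (hl : Linked F p q)
    (hmin : ∀ r : B.Arrow, r.fst = p.fst → Linked F r q → B.dist p q ≤ B.dist r q)
    (hi : i.1 ∉ B.branch p ∪ B.branch q) :
    ∃ ν : B.Alg K, B.IsPeirce K i.1 (B.src p) ν ∧
      ∀ j : J, j.1 ∈ B.branch p ∪ B.branch q → ν * F ⟨B.src p, hl.1⟩ j = F i j := by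
  suffices ∃ ν : B.Alg K, B.IsPeirce K i.1 (B.src p) ν ∧
      ν * F ⟨B.src p, hl.1⟩ ⟨B.src q, hl.2.1⟩ = F i ⟨B.src q, hl.2.1⟩ ∧
      ∀ j : J, j.1 ∈ B.branch p ∪ B.branch q → j.1 ≠ B.src q → ν * F ⟨B.src p, hl.1⟩ j = 0 by
    obtain ⟨ν, hν, hνq, hν0⟩ := this
    refine ⟨ν, hν, fun j hj => ?_⟩
    by_cases hjq : j.1 = B.src q
    · obtain rfl : j = ⟨B.src q, hl.2.1⟩ := Subtype.ext hjq
      exact hνq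
    · rw [hF.entry_eq_zero_of_mem_right hpq hl hi hj hjq, hν0 j hj hjq]
  by_cases h0 : F i ⟨B.src q, hl.2.1⟩ = 0
  · exact ⟨0, isPeirce_zero _ _, by rw [h0, zero_mul], fun _ _ _ => zero_mul _⟩
  obtain ⟨r, q', c, hr, hq', hrf, -, -, hc⟩ := hF.exists_of_ne_zero h0
  have hq'p : q'.fst = p.fst := B.fst_eq_of_src_mem_branch_union hpq hrf.symm
    (hq' ▸ Or.inr (B.src_mem_branch q)) (hr ▸ hi)
  obtain rfl : q' = q := B.eq_of_src_eq_of_fst_eq hq' (hq'p.trans hpq)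
  have hrp : r.fst = p.fst := hrf.trans hq'p
  have hne : r ≠ p := fun h => hi (hr ▸ h ▸ Or.inl (B.src_mem_branch r))
  obtain ⟨c₀, hc₀, h_pq⟩ := hF.exists_entry_eq_smul_arc hpq hl
  refine ⟨(c * c₀⁻¹) • B.arc K r p, hr ▸ (isPeirce_arc hrp hne).smul _, ?_, fun j hj hjq => ?_⟩
  · rw [hc, h_pq, smul_mul_smul_comm, inv_mul_cancel_right₀ hc₀,
      B.arc_mul_arc_of_dist_le' hrp hpq (hmin r hrp (linked_of_ne_zero hr hq' h0))]
  · rw [smul_mul_assoc, hF.arc_mul_entry_eq_zero hpq hl hj hjq hrp hne, smul_zero]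

theorem exists_mul_eq_of_notMem_right (hF : IsStringMatrix B K F) (hpq : p.fst = q.fst)
    (hl : Linked F p q)
    (hmin : ∀ r : B.Arrow, p.fst = r.fst → Linked F p r → B.dist p q ≤ B.dist p r)
    (hj : j.1 ∉ B.branch p ∪ B.branch q) :
    ∃ μ : B.Alg K, B.IsPeirce K (B.src q) j.1 μ ∧
      ∀ i : I, i.1 ∈ B.branch p ∪ B.branch q → F i ⟨B.src q, hl.2.1⟩ * μ = F i j := by
  suffices ∃ μ : B.Alg K, B.IsPeirce K (B.src q) j.1 μ ∧
      F ⟨B.src p, hl.1⟩ ⟨B.src q, hl.2.1⟩ * μ = F ⟨B.src p, hl.1⟩ j ∧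
      ∀ i : I, i.1 ∈ B.branch p ∪ B.branch q → i.1 ≠ B.src p →
        F i ⟨B.src q, hl.2.1⟩ * μ = 0 by
    obtain ⟨μ, hμ, hμp, hμ0⟩ := this
    refine ⟨μ, hμ, fun i hi => ?_⟩
    by_cases hip : i.1 = B.src p
    · obtain rfl : i = ⟨B.src p, hl.1⟩ := Subtype.ext hip
      exact hμp
    · rw [hF.entry_eq_zero_of_mem_left hpq hl hi hip hj, hμ0 i hi hip]
  by_cases h0 : F ⟨B.src p, hl.1⟩ j = 0
  · exact ⟨0, isPeirce_zero _ _, by rw [h0, mul_zero], fun _ _ _ => mul_zero _⟩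
  obtain ⟨p', r, c, hp', hr, hrf, -, -, hc⟩ := hF.exists_of_ne_zero h0
  have hp'p : p'.fst = p.fst := B.fst_eq_of_src_mem_branch_union hpq hrf
    (hp' ▸ Or.inl (B.src_mem_branch p)) (hr ▸ hj)
  obtain rfl : p' = p := B.eq_of_src_eq_of_fst_eq hp' hp'p
  have hqr : q.fst = r.fst := hpq.symm.trans hrf
  have hne : q ≠ r := fun h => hj (hr ▸ h ▸ Or.inr (B.src_mem_branch q))
  obtain ⟨c₀, hc₀, h_pq⟩ := hF.exists_entry_eq_smul_arc hpq hl
  refine ⟨(c₀⁻¹ * c) • B.arc K q r, hr ▸ (isPeirce_arc hqr hne).smul _, ?_, fun i hi hip => ?_⟩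
  · rw [hc, h_pq, smul_mul_smul_comm, mul_inv_cancel_left₀ hc₀,
      B.arc_mul_arc_of_dist_le hpq hqr (hmin r hrf (linked_of_ne_zero hp' hr h0))]
  · rw [mul_smul_comm, hF.entry_mul_arc_eq_zero hpq hl hi hip hqr hne, smul_zero]

theorem mem_branch_union_of_dist_le (hF : IsStringMatrix B K F) (hpq : p.fst = q.fst)
    (hl : Linked F p q)
    (hmin : ∀ p' q' : B.Arrow, p'.fst = p.fst → q'.fst = p.fst → Linked F p' q' →
      B.dist p q ≤ B.dist p' q') {x : B.Edge} (hx : x ∈ I ∨ x ∈ J) :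
    x ∈ B.branch p ∪ B.branch q := by
  choose! ν hν hν_mul using fun (i : I) (hi : i.1 ∉ B.branch p ∪ B.branch q) =>
    hF.exists_mul_eq_of_notMem_left hpq hl (fun r hr => hmin r q hr hpq.symm) hi
  choose! μ hμ hμ_mul using fun (j : J) (hj : j.1 ∉ B.branch p ∪ B.branch q) =>
    hF.exists_mul_eq_of_notMem_right hpq hl (fun r hr => hmin p r rfl hr.symm) hj
  have h_all := hF.all_mem_of_elimination (Or.inl (B.src_mem_branch p))
    (Or.inr (B.src_mem_branch q)) hν hμ hν_mul hμ_mul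
  exact hx.elim (h_all.1 x) (h_all.2 x)

end Nearest

theorem linked_of_fst_eq (hF : IsStringMatrix B K F) {a b : B.Arrow} (hf : a.fst = b.fst)
    (hab : a ≠ b) (ha : B.src a ∈ I ∨ B.src a ∈ J) (hb : B.src b ∈ I ∨ B.src b ∈ J) :
    Linked F a b ∨ Linked F b a := by
  classical
  by_cases h_ex : ∃ n, ∃ p q : B.Arrow, p.fst = a.fst ∧ q.fst = a.fst ∧ Linked F p q ∧
      B.dist p q = n
  · obtain ⟨p, q, hp, hq, hl, hn⟩ := Nat.find_spec h_ex
    have h_mem {d : B.Arrow} (h : d.fst = a.fst) (hd : B.src d ∈ I ∨ B.src d ∈ J) :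
        d = p ∨ d = q :=
      (hF.mem_branch_union_of_dist_le (hp.trans hq.symm) hl (fun p' q' hp' hq' hl' =>
        hn ▸ Nat.find_min' h_ex ⟨p', q', hp'.trans hp, hq'.trans hp, hl', rfl⟩) hd).imp
        (B.eq_of_src_mem_branch (h.trans hp.symm)) (B.eq_of_src_mem_branch (h.trans hq.symm))
    rcases h_mem rfl ha with rfl | rfl <;> rcases h_mem hf.symm hb with rfl | rfl
    exacts [absurd rfl hab, Or.inl hl, Or.inr hl, absurd rfl hab]
  · have h_not_linked : ∀ p q : B.Arrow, p.fst = q.fst → Linked F p q → p ≠ a ∧ q ≠ a :=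
      fun p q h hl => ⟨fun hp => h_ex ⟨_, p, q, by rw [hp], by rw [← h, hp], hl, rfl⟩,
        fun hq => h_ex ⟨_, p, q, by rw [h, hq], by rw [hq], hl, rfl⟩⟩
    exact absurd (B.eq_of_src_mem_branch hf.symm
      (hF.mem_branch_of_not_linked h_not_linked ha (B.src_mem_branch a) hb)).symm hab

theorem linked_of_mem (hF : IsStringMatrix B K F) {p q : B.Arrow} (hp : B.src p ∈ I)
    (hq : B.src q ∈ J) (hf : p.fst = q.fst) : Linked F p q := by
  have hne : p ≠ q := by
    rintro rfl
    exact hF.disjoint _ hp hq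
  exact (hF.linked_of_fst_eq hf hne (Or.inl hp) (Or.inr hq)).resolve_right
    fun h => hF.disjoint _ h.1 hq

theorem eq_of_mem_left (hF : IsStringMatrix B K F) {p q : B.Arrow} (hp : B.src p ∈ I)
    (hq : B.src q ∈ I) (hf : p.fst = q.fst) : p = q := by
  by_contra hne
  rcases hF.linked_of_fst_eq hf hne (Or.inl hp) (Or.inl hq) with h | h
  · exact hF.disjoint _ hq h.2.1
  · exact hF.disjoint _ hp h.2.1

theorem eq_of_mem_right (hF : IsStringMatrix B K F) {p q : B.Arrow} (hp : B.src p ∈ J)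
    (hq : B.src q ∈ J) (hf : p.fst = q.fst) : p = q := by
  by_contra hne
  rcases hF.linked_of_fst_eq hf hne (Or.inr hp) (Or.inr hq) with h | h
  · exact hF.disjoint _ h.1 hp
  · exact hF.disjoint _ h.1 hq

theorem exists_linked_of_mem_left (hF : IsStringMatrix B K F) {k : B.Edge} (hk : k ∈ I) :
    ∃ p q : B.Arrow, B.src p = k ∧ p.fst = q.fst ∧ Linked F p q := by
  by_contra hcon
  have h_closed : ∀ i j, F i j ≠ 0 → (i.1 ∈ ({k} : Set B.Edge) ↔ j.1 ∈ ({k} : Set B.Edge)) :=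
    fun i j hij => by
      obtain ⟨d, d', -, hd, hd', hf, -⟩ := hF.exists_of_ne_zero hij
      exact iff_of_false
        (fun h => hcon ⟨d, d', hd.trans h, hf, linked_of_ne_zero hd hd' hij⟩)
        fun h => hF.disjoint _ hk (h ▸ j.2)
  obtain ⟨x, hx⟩ := hF.nonempty_right
  rcases hF.all_or_none {k} h_closed with h | h
  · exact h.1 k hk rfl
  · exact hF.disjoint _ hk (h.2 x hx ▸ hx)

theorem exists_linked_of_mem_right (hF : IsStringMatrix B K F) {k : B.Edge} (hk : k ∈ J) :
    ∃ p q : B.Arrow, B.src q = k ∧ p.fst = q.fst ∧ Linked F p q := by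
  by_contra hcon
  have h_closed : ∀ i j, F i j ≠ 0 → (i.1 ∈ ({k} : Set B.Edge) ↔ j.1 ∈ ({k} : Set B.Edge)) :=
    fun i j hij => by
      obtain ⟨d, d', -, hd, hd', hf, -⟩ := hF.exists_of_ne_zero hij
      exact iff_of_false (fun h => hF.disjoint _ i.2 (h ▸ hk))
        fun h => hcon ⟨d, d', hd'.trans h, hf, linked_of_ne_zero hd hd' hij⟩
  obtain ⟨x, hx⟩ := hF.nonempty_left
  rcases hF.all_or_none {k} h_closed with h | h
  · exact h.2 k hk rfl
  · exact hF.disjoint _ hx (h.1 x hx ▸ hk)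

end IsStringMatrix

end StringMatrix

/-! ### Arrows of the diagram -/

section Diagram

open BrauerTree IsStringMatrix

variable {V : Type v} {B : BrauerTree V} {K : Type u} [Field K]
  {T : CochainComplex (ModuleCat.{max u v} (B.Alg K)) ℤ} {D : TermDecomposition B K T}

namespace TermDecomposition

variable [Finite V] {a d q : B.Arrow} {k : B.Edge}

theorem mem_arrows_iff : a ∈ D.arrows ↔ ∃ p q : B.Arrow, p.fst = q.fst ∧ p.fst = a.fst ∧
    Linked D.entry p q ∧ B.dist p a < B.dist p q := by
  constructor
  · rintro ⟨i, j, hij, p, m, hp, hm, hlt, l, hl, rfl⟩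
    rw [component_ne_zero_iff] at hij
    refine ⟨p, (B.next ^ m) p, (B.next_pow_fst p m).symm, (B.next_pow_fst p l).symm,
      linked_of_ne_zero hp hm hij, ?_⟩
    rwa [B.dist_eq hlt rfl, B.dist_eq (hl.trans hlt) rfl]
  · rintro ⟨p, q, hpq, hpa, ⟨hp, hq, hne⟩, hlt⟩
    refine ⟨⟨_, hp⟩, ⟨_, hq⟩, (D.component_ne_zero_iff _ _).2 hne, p, B.dist p q, rfl, ?_,
      B.dist_lt hpq, B.dist p a, hlt, (B.next_pow_dist hpa).symm⟩
    rw [B.next_pow_dist hpq]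

theorem next_ne_of_mem_arrows (ha : a ∈ D.arrows) : B.next a ≠ a := by
  obtain ⟨p, q, hpq, hpa, -, hlt⟩ := mem_arrows_iff.1 ha
  intro h_fix
  have h_one : B.cycleLength a = 1 := Function.minimalPeriod_eq_one_iff_isFixedPt.2 h_fix
  have h_lt := B.dist_lt hpq
  rw [B.cycleLength_eq hpa, h_one] at h_lt
  lia

theorem mem_arrows_of_linked (hF : IsStringMatrix B K D.entry) {p q : B.Arrow}
    (hpq : p.fst = q.fst) (hl : Linked D.entry p q) : p ∈ D.arrows :=
  mem_arrows_iff.2 ⟨p, q, hpq, rfl, hl, B.dist_self p ▸ B.dist_pos hpq (hF.ne_of_linked hl)⟩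

theorem next_symm_mem_arrows_of_linked (hF : IsStringMatrix B K D.entry) {p q : B.Arrow}
    (hpq : p.fst = q.fst) (hl : Linked D.entry p q) : B.next.symm q ∈ D.arrows :=
  mem_arrows_iff.2 ⟨p, q, hpq, hpq.trans (B.next_symm_fst q).symm, hl,
    B.dist_next_symm_lt hpq (hF.ne_of_linked hl)⟩

theorem exists_mem_arrows_of_mem_left (hF : IsStringMatrix B K D.entry) (hk : k ∈ D.I) :
    ∃ p ∈ D.arrows, B.src p = k := by
  obtain ⟨p, q, hp, hpq, hl⟩ := hF.exists_linked_of_mem_left hk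
  exact ⟨p, mem_arrows_of_linked hF hpq hl, hp⟩

theorem exists_next_symm_mem_arrows_of_mem_right (hF : IsStringMatrix B K D.entry)
    (hk : k ∈ D.J) : ∃ q, B.next.symm q ∈ D.arrows ∧ B.src q = k := by
  obtain ⟨p, q, hq, hpq, hl⟩ := hF.exists_linked_of_mem_right hk
  exact ⟨q, next_symm_mem_arrows_of_linked hF hpq hl, hq⟩

theorem src_notMem_right_of_mem_arrows (hF : IsStringMatrix B K D.entry) (ha : a ∈ D.arrows) :
    B.src a ∉ D.J := by
  obtain ⟨p, q, hpq, hpa, hl, hlt⟩ := mem_arrows_iff.1 ha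
  intro h
  exact hlt.ne (by rw [hF.eq_of_mem_right h hl.2.1 (hpa.symm.trans hpq)])

theorem src_next_notMem_left_of_mem_arrows (hF : IsStringMatrix B K D.entry)
    (ha : a ∈ D.arrows) : B.src (B.next a) ∉ D.I := by
  obtain ⟨p, q, hpq, hpa, hl, hlt⟩ := mem_arrows_iff.1 ha
  intro h
  have h_ret : (B.next ^ (B.dist p a + 1)) p = (B.next ^ 0) p := by
    rw [pow_succ', Equiv.Perm.mul_apply, B.next_pow_dist hpa]
    exact hF.eq_of_mem_left h hl.1 ((B.next_fst a).trans hpa.symm)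
  have h_lt := B.dist_lt hpq
  have := B.eq_of_next_pow_eq p (by lia) (by lia) h_ret
  lia

theorem next_mem_arrows (ha : a ∈ D.arrows) (h : B.src (B.next a) ∉ D.J) :
    B.next a ∈ D.arrows := by
  obtain ⟨p, q, hpq, hpa, hl, hlt⟩ := mem_arrows_iff.1 ha
  have h_step : (B.next ^ (B.dist p a + 1)) p = B.next a := by
    rw [pow_succ', Equiv.Perm.mul_apply, B.next_pow_dist hpa]
  refine mem_arrows_iff.2 ⟨p, q, hpq, hpa.trans (B.next_fst a).symm, hl,
    ((B.dist_le h_step).trans hlt).lt_of_ne fun h_eq => h ?_⟩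
  rw [← B.next_pow_dist (hpa.trans (B.next_fst a).symm), h_eq, B.next_pow_dist hpq]
  exact hl.2.1

theorem next_symm_mem_arrows (ha : a ∈ D.arrows) (h : B.src a ∉ D.I) :
    B.next.symm a ∈ D.arrows := by
  obtain ⟨p, q, hpq, hpa, hl, hlt⟩ := mem_arrows_iff.1 ha
  refine mem_arrows_iff.2 ⟨p, q, hpq, hpa.trans (B.next_symm_fst a).symm, hl,
    (B.dist_next_symm_lt hpa ?_).trans hlt⟩
  rintro rfl
  exact h hl.1

theorem exists_mem_arrows_of_not_isMarked (hk : k ∈ D.vertices) (h : ¬ D.IsMarked k) :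
    ∃ d ∈ D.arrows, B.src d = k := by
  rcases hk with hk | ⟨a, ha, rfl | rfl⟩
  · exact absurd hk h
  · exact ⟨a, ha, rfl⟩
  · exact ⟨B.next a, next_mem_arrows ha fun hJ => h (Or.inr hJ), rfl⟩

theorem mem_branch_of_mem_left (hF : IsStringMatrix B K D.entry) (ha : B.src a ∈ D.I)
    (h : a ∉ D.arrows) {y : B.Edge} (hy : D.IsMarked y) : y ∈ B.branch a :=
  hF.mem_branch_of_not_linked (a := a) (fun _ _ hpq hl =>
    ⟨fun hp => h (hp ▸ mem_arrows_of_linked hF hpq hl),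
      fun hq => hF.disjoint _ ha (hq ▸ hl.2.1)⟩) (Or.inl ha) (B.src_mem_branch a) hy

theorem mem_branch_of_mem_right (hF : IsStringMatrix B K D.entry) (ha : B.src a ∈ D.J)
    (h : B.next.symm a ∉ D.arrows) {y : B.Edge} (hy : D.IsMarked y) : y ∈ B.branch a :=
  hF.mem_branch_of_not_linked (a := a) (fun _ _ hpq hl =>
    ⟨fun hp => hF.disjoint _ hl.1 (hp ▸ ha),
      fun hq => h (hq ▸ next_symm_mem_arrows_of_linked hF hpq hl)⟩)
    (Or.inr ha) (B.src_mem_branch a) hy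

theorem mem_branch_symm_of_not_isMarked (hF : IsStringMatrix B K D.entry) (ha : a ∈ D.arrows)
    (h : ¬ D.IsMarked (B.src a)) {y : B.Edge} (hy : D.IsMarked y) : y ∈ B.branch a.symm := by
  obtain ⟨p, q, -, hpa, hl, -⟩ := mem_arrows_iff.1 ha
  rw [← B.src_symm] at h
  exact hF.mem_branch_of_not_linked (a := a.symm)
    (fun _ _ _ hrs => ⟨fun hr => h (Or.inl (hr ▸ hrs.1)), fun hs => h (Or.inr (hs ▸ hrs.2.1))⟩)
    (Or.inl hl.1) (B.mem_branch_of_snd_mem (d := a.symm)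
      (show a.fst ∈ (B.src p : Sym2 V) from hpa ▸ B.fst_mem_src p)) hy

theorem isDegreeOneSource_of_symm_notMem (hF : IsStringMatrix B K D.entry)
    (hd : B.src d ∈ D.I) (h : d ∈ D.arrows) (h' : d.symm ∉ D.arrows) :
    D.IsDegreeOneSource (B.src d) := by
  refine ⟨hd, Set.ncard_eq_one.2 ⟨d, Set.ext fun c => ⟨?_, ?_⟩⟩⟩
  · rintro ⟨hc, hc_src | hc_tgt⟩
    · exact (B.src_eq_iff.1 hc_src).resolve_right fun hcd => h' (hcd ▸ hc)
    · rw [← hc_tgt] at hd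
      exact absurd hd (src_next_notMem_left_of_mem_arrows hF hc)
  · rintro rfl
    exact ⟨h, Or.inl rfl⟩

theorem isDegreeOneSink_of_next_symm_symm_notMem (hF : IsStringMatrix B K D.entry)
    (hd : B.src d ∈ D.J) (h : B.next.symm d ∈ D.arrows) (h' : B.next.symm d.symm ∉ D.arrows) :
    D.IsDegreeOneSink (B.src d) := by
  refine ⟨hd, Set.ncard_eq_one.2 ⟨B.next.symm d, Set.ext fun c => ⟨?_, ?_⟩⟩⟩
  · rintro ⟨hc, hc_src | hc_tgt⟩
    · exact absurd (hc_src ▸ hd) (src_notMem_right_of_mem_arrows hF hc)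
    · refine B.next.eq_symm_apply.2 ((B.src_eq_iff.1 hc_tgt).resolve_right fun hcd => h' ?_)
      rwa [← hcd, Equiv.symm_apply_apply]
  · rintro rfl
    exact ⟨h, Or.inr (by rw [tgt, Equiv.apply_symm_apply])⟩

theorem entry_mul_arc_eq_zero_of_notMem_arrows (hF : IsStringMatrix B K D.entry)
    (hd : B.src d ∈ D.J) (h : B.next.symm d ∉ D.arrows) {r : B.Arrow} (hdr : d.fst = r.fst)
    (hne : d ≠ r) (i : D.I) : D.entry i ⟨B.src d, hd⟩ * B.arc K d r = 0 := by
  by_cases h0 : D.entry i ⟨B.src d, hd⟩ = 0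
  · rw [h0, zero_mul]
  obtain ⟨p, q, c, hp, hq, hpq, hpq_ne, -, hc⟩ := hF.exists_of_ne_zero h0
  have hl := linked_of_ne_zero hp hq h0
  have hpd : p.fst ≠ d.fst := fun hpd => h
    (B.eq_of_src_eq_of_fst_eq hq (hpq.symm.trans hpd) ▸ next_symm_mem_arrows_of_linked hF hpq hl)
  rw [hc, smul_mul_assoc, B.arc_mul_arc_of_fst_ne hpq hdr hpq_ne hne hpd, smul_zero]

theorem arc_mul_entry_eq_zero_of_notMem_arrows (hF : IsStringMatrix B K D.entry)
    (hd : B.src d ∈ D.I) (h : d ∉ D.arrows) {r : B.Arrow} (hrd : r.fst = d.fst) (hne : r ≠ d)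
    (j : D.J) : B.arc K r d * D.entry ⟨B.src d, hd⟩ j = 0 := by
  by_cases h0 : D.entry ⟨B.src d, hd⟩ j = 0
  · rw [h0, mul_zero]
  obtain ⟨p, q, c, hp, hq, hpq, hpq_ne, -, hc⟩ := hF.exists_of_ne_zero h0
  have hl := linked_of_ne_zero hp hq h0
  have hrp : r.fst ≠ p.fst := fun hrp => h
    (B.eq_of_src_eq_of_fst_eq hp (hrp.symm.trans hrd) ▸ mem_arrows_of_linked hF hpq hl)
  rw [hc, mul_smul_comm, B.arc_mul_arc_of_fst_ne hrd hpq hne hpq_ne hrp, smul_zero]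

end TermDecomposition

end Diagram

/-! ### Two diagrams with one common vertex -/

namespace BrauerTree

variable {V : Type v} {B : BrauerTree V}

theorem exists_mem_and_symm_mem_of_disjoint {X Y : Set B.Arrow} (h : Disjoint X Y) {k : B.Edge}
    (hX : ∃ d ∈ X, B.src d = k) (hY : ∃ d ∈ Y, B.src d = k) :
    ∃ d, B.src d = k ∧ d ∈ X ∧ d.symm ∈ Y := by
  obtain ⟨d, hd, rfl⟩ := hX
  obtain ⟨d', hd', h_src⟩ := hY
  rcases B.src_eq_iff.1 h_src with rfl | rfl
  · exact absurd hd' (h.notMem_of_mem_left hd)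
  · exact ⟨d, rfl, hd, hd'⟩

variable [Finite V] {K : Type u} [Field K] {a d : B.Arrow} {e e' : B.Edge} {x : B.Alg K}

theorem IsPeirce.eq_zero_of_mem_branch (hx : B.IsPeirce K e e' x) (he : e ∈ B.branch d.symm)
    (he' : e' ∈ B.branch d) (hne : e ≠ B.src d) (hne' : e' ≠ B.src d) : x = 0 := by
  have h_not_mem : e' ∉ B.branch d.symm :=
    fun h => hne' (B.eq_of_mem_branch_of_mem_branch_symm he' h)
  by_contra h0
  obtain ⟨p, p', -, rfl, rfl, hf, -⟩ :=
    hx.exists_of_ne_zero (fun h => h_not_mem (h ▸ he)) h0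
  refine hne ?_
  rw [B.eq_of_src_mem_branch_of_src_notMem hf he h_not_mem, B.src_symm]

theorem IsPeirce.exists_eq_smul_arc_symm_left (hx : B.IsPeirce K (B.src a) e x)
    (he : e ∈ B.branch a) (hne : e ≠ B.src a) (h0 : x ≠ 0) :
    ∃ (b : B.Arrow) (c : K), B.src b = e ∧ a.symm.fst = b.fst ∧ c ≠ 0 ∧
      x = c • B.arc K a.symm b := by
  obtain ⟨p, b, c, hp, rfl, hf, hpb, hc, hx⟩ := hx.exists_of_ne_zero hne.symm h0
  rcases B.src_eq_iff.1 hp with rfl | rfl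
  · exact absurd (B.eq_of_src_mem_branch hf.symm he).symm hpb
  · exact ⟨b, c, rfl, hf, hc, hx⟩

theorem IsPeirce.exists_eq_smul_arc_symm_right (hx : B.IsPeirce K e (B.src a) x)
    (he : e ∈ B.branch a) (hne : e ≠ B.src a) (h0 : x ≠ 0) :
    ∃ (b : B.Arrow) (c : K), B.src b = e ∧ b.fst = a.symm.fst ∧ c ≠ 0 ∧
      x = c • B.arc K b a.symm := by
  obtain ⟨b, p, c, rfl, hp, hf, hbp, hc, hx⟩ := hx.exists_of_ne_zero hne h0
  rcases B.src_eq_iff.1 hp with rfl | rfl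
  · exact absurd (B.eq_of_src_mem_branch hf he) hbp
  · exact ⟨b, c, rfl, hf, hc, hx⟩

end BrauerTree

namespace IsStringMatrix

open BrauerTree

variable {V : Type v} [Finite V] {B : BrauerTree V} {K : Type u} [Field K] {I J : Finset B.Edge}
  {F : Matrix I J (B.Alg K)}

theorem entry_ne_zero_of_fst_eq (hF : IsStringMatrix B K F) {i : I} {j : J} {p q : B.Arrow}
    (hp : B.src p = i.1) (hq : B.src q = j.1) (hf : p.fst = q.fst) : F i j ≠ 0 := by
  obtain ⟨i, hi⟩ := i
  obtain ⟨j, hj⟩ := j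
  subst hp hq
  exact (hF.linked_of_mem hi hj hf).2.2

theorem eq_zero_of_sum_mul_entry_eq_zero (hF : IsStringMatrix B K F) {a : B.Arrow}
    (ha : B.src a ∈ J) (hI : ∀ i ∈ I, i ∈ B.branch a) {g : I → B.Alg K}
    (hg : ∀ i : I, B.IsPeirce K (B.src a) i.1 (g i)) (h : ∑ i, g i * F i ⟨B.src a, ha⟩ = 0)
    (i : I) : g i = 0 := by
  have h_ne (i : I) : i.1 ≠ B.src a := fun h => hF.disjoint _ i.2 (h ▸ ha)
  have h_arc (i : I) := (hg i).exists_eq_smul_arc_symm_left (hI i i.2) (h_ne i)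
  by_contra h0
  obtain ⟨b, c, hb, hf, hc, hgi⟩ := h_arc i h0
  rw [Fintype.sum_eq_single i fun i' hi' => ?_] at h
  · have hFi := hF.entry_ne_zero_of_fst_eq (j := ⟨_, ha⟩) hb (B.src_symm a) hf.symm
    obtain ⟨b', c', hb', hf', hc', hFi⟩ :=
      (hF.peirce i ⟨_, ha⟩).exists_eq_smul_arc_symm_right (hI i i.2) (h_ne i) hFi
    obtain rfl : b' = b := B.eq_of_src_eq_of_fst_eq (hb'.trans hb.symm) (hf'.trans hf)
    have h_ne' : a.symm ≠ b' := fun h => h_ne i (by rw [← hb, ← h, B.src_symm])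
    rw [hgi, hFi, smul_mul_smul_comm, B.arc_mul_arc_self hf h_ne'] at h
    exact smul_ne_zero (mul_ne_zero hc hc') (B.pathElt_cycleLength_ne_zero _) h
  · suffices g i' = 0 by rw [this, zero_mul]
    by_contra h0'
    obtain ⟨b', c', hb', hf', -⟩ := h_arc i' h0'
    refine hi' (Subtype.ext ?_)
    rw [← hb, ← hb', hF.eq_of_mem_left (hb'.symm ▸ i'.2) (hb.symm ▸ i.2) (hf'.symm.trans hf)]

theorem eq_zero_of_sum_entry_mul_eq_zero (hF : IsStringMatrix B K F) {a : B.Arrow}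
    (ha : B.src a ∈ I) (hJ : ∀ j ∈ J, j ∈ B.branch a) {g : J → B.Alg K}
    (hg : ∀ j : J, B.IsPeirce K j.1 (B.src a) (g j)) (h : ∑ j, F ⟨B.src a, ha⟩ j * g j = 0)
    (j : J) : g j = 0 := by
  have h_ne (j : J) : j.1 ≠ B.src a := fun h => hF.disjoint _ ha (h ▸ j.2)
  have h_arc (j : J) := (hg j).exists_eq_smul_arc_symm_right (hJ j j.2) (h_ne j)
  by_contra h0
  obtain ⟨b, c, hb, hf, hc, hgj⟩ := h_arc j h0
  rw [Fintype.sum_eq_single j fun j' hj' => ?_] at h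
  · have hFj := hF.entry_ne_zero_of_fst_eq (i := ⟨_, ha⟩) (B.src_symm a) hb hf.symm
    obtain ⟨b', c', hb', hf', hc', hFj⟩ :=
      (hF.peirce ⟨_, ha⟩ j).exists_eq_smul_arc_symm_left (hJ j j.2) (h_ne j) hFj
    obtain rfl : b' = b := B.eq_of_src_eq_of_fst_eq (hb'.trans hb.symm) (hf'.symm.trans hf.symm)
    have h_ne' : a.symm ≠ b' := fun h => h_ne j (by rw [← hb, ← h, B.src_symm])
    rw [hgj, hFj, smul_mul_smul_comm, B.arc_mul_arc_self hf' h_ne'] at h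
    exact smul_ne_zero (mul_ne_zero hc' hc) (B.pathElt_cycleLength_ne_zero _) h
  · suffices g j' = 0 by rw [this, mul_zero]
    by_contra h0'
    obtain ⟨b', c', hb', hf', -⟩ := h_arc j' h0'
    refine hj' (Subtype.ext ?_)
    rw [← hb, ← hb', hF.eq_of_mem_right (hb'.symm ▸ j'.2) (hb.symm ▸ j.2) (hf'.trans hf.symm)]

theorem arc_mul_entry_eq_zero_of_dist_lt (hF : IsStringMatrix B K F) {p q δ : B.Arrow}
    (hpq : p.fst = q.fst) (hpδ : p.fst = δ.fst) (hl : Linked F p q) (hne : δ ≠ p)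
    (hlt : B.dist p δ < B.dist p q) (j : J) : B.arc K δ p * F ⟨B.src p, hl.1⟩ j = 0 := by
  by_cases h0 : F ⟨B.src p, hl.1⟩ j = 0
  · rw [h0, mul_zero]
  obtain ⟨r, s, c, hr, hs, hf, hrs, -, hc⟩ := hF.exists_of_ne_zero h0
  rw [hc, mul_smul_comm]
  by_cases hrp : p.fst = r.fst
  · obtain rfl : r = p := B.eq_of_src_eq_of_fst_eq hr hrp.symm
    obtain rfl : s = q := hF.eq_of_mem_right (hs ▸ j.2) hl.2.1 (hf.symm.trans hpq)
    have h_cycle := B.dist_add_comm hpδ.symm hne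
    rw [B.arc_mul_arc_eq_zero hpδ.symm (by lia), smul_zero]
  · rw [B.arc_mul_arc_of_fst_ne hpδ.symm hf hne hrs (hpδ ▸ hrp), smul_zero]

theorem entry_mul_arc_eq_zero_of_dist_lt (hF : IsStringMatrix B K F) {p q δ : B.Arrow}
    (hpq : p.fst = q.fst) (hpδ : p.fst = δ.fst) (hl : Linked F p q) (hne : δ ≠ p)
    (hlt : B.dist p δ < B.dist p q) (i : I) : F i ⟨B.src q, hl.2.1⟩ * B.arc K q δ = 0 := by
  have hqδ : q ≠ δ := by
    rintro rfl
    exact hlt.false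
  by_cases h0 : F i ⟨B.src q, hl.2.1⟩ = 0
  · rw [h0, zero_mul]
  obtain ⟨r, s, c, hr, hs, hf, hrs, -, hc⟩ := hF.exists_of_ne_zero h0
  rw [hc, smul_mul_assoc]
  by_cases hrp : r.fst = p.fst
  · obtain rfl : s = q := B.eq_of_src_eq_of_fst_eq hs (hf.symm.trans (hrp.trans hpq))
    obtain rfl : r = p := hF.eq_of_mem_left (hr ▸ i.2) hl.1 hrp
    have h_pos := B.dist_pos hpδ hne.symm
    have h_add := B.dist_add hpq (hpq.symm.trans hpδ)
    rw [B.arc_mul_arc_eq_zero hpq (by lia), smul_zero]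
  · rw [B.arc_mul_arc_of_fst_ne hf (hpq.symm.trans hpδ) hrs hqδ (hpq ▸ hrp), smul_zero]

end IsStringMatrix

section OneCommonVertex

open BrauerTree TermDecomposition

variable {V : Type v} [Finite V] {B : BrauerTree V} {K : Type u} [Field K]
  {S T : CochainComplex (ModuleCat.{max u v} (B.Alg K)) ℤ}
  {DS : TermDecomposition B K S} {DT : TermDecomposition B K T} {k : B.Edge}

namespace TermDecomposition

theorem disjoint_arrows (hk : DS.vertices ∩ DT.vertices ⊆ {k}) :
    Disjoint DS.arrows DT.arrows := by
  refine Set.disjoint_left.2 fun a haS haT => next_ne_of_mem_arrows haS ?_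
  have h_src : B.src a = k := hk ⟨Or.inr ⟨a, haS, Or.inl rfl⟩, Or.inr ⟨a, haT, Or.inl rfl⟩⟩
  have h_tgt : B.tgt a = k := hk ⟨Or.inr ⟨a, haS, Or.inr rfl⟩, Or.inr ⟨a, haT, Or.inr rfl⟩⟩
  exact B.eq_of_src_eq_of_fst_eq (h_tgt.trans h_src.symm) (B.next_fst a)

theorem exists_next_symm_mem_arrows_of_mem_right_of_mem_right (hFS : IsStringMatrix B K DS.entry)
    (hFT : IsStringMatrix B K DT.entry) (hk : DS.vertices ∩ DT.vertices ⊆ {k}) (hkS : k ∈ DS.J)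
    (hkT : k ∈ DT.J) :
    ∃ d, B.src d = k ∧ B.next.symm d ∈ DS.arrows ∧ B.next.symm d.symm ∈ DT.arrows :=
  exists_mem_and_symm_mem_of_disjoint ((disjoint_arrows hk).preimage B.next.symm)
    (exists_next_symm_mem_arrows_of_mem_right hFS hkS)
    (exists_next_symm_mem_arrows_of_mem_right hFT hkT)

theorem exists_mem_arrows_of_mem_left_of_mem_left (hFS : IsStringMatrix B K DS.entry)
    (hFT : IsStringMatrix B K DT.entry) (hk : DS.vertices ∩ DT.vertices ⊆ {k}) (hkS : k ∈ DS.I)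
    (hkT : k ∈ DT.I) : ∃ d, B.src d = k ∧ d ∈ DS.arrows ∧ d.symm ∈ DT.arrows :=
  exists_mem_and_symm_mem_of_disjoint (disjoint_arrows hk)
    (exists_mem_arrows_of_mem_left hFS hkS) (exists_mem_arrows_of_mem_left hFT hkT)

theorem isDegreeOneSink_of_mem_right (hFS : IsStringMatrix B K DS.entry)
    (hFT : IsStringMatrix B K DT.entry) (hk : DS.vertices ∩ DT.vertices ⊆ {k}) (hkS : k ∈ DS.J)
    (hkT : k ∈ DT.J) : DS.IsDegreeOneSink k := by
  obtain ⟨d, rfl, hdS, hdT⟩ :=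
    exists_next_symm_mem_arrows_of_mem_right_of_mem_right hFS hFT hk hkS hkT
  exact isDegreeOneSink_of_next_symm_symm_notMem hFS hkS hdS
    ((disjoint_arrows hk).notMem_of_mem_right hdT)

theorem isDegreeOneSource_of_mem_left (hFS : IsStringMatrix B K DS.entry)
    (hFT : IsStringMatrix B K DT.entry) (hk : DS.vertices ∩ DT.vertices ⊆ {k}) (hkS : k ∈ DS.I)
    (hkT : k ∈ DT.I) : DS.IsDegreeOneSource k := by
  obtain ⟨d, rfl, hdS, hdT⟩ := exists_mem_arrows_of_mem_left_of_mem_left hFS hFT hk hkS hkT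
  exact isDegreeOneSource_of_symm_notMem hFS hkS hdS
    ((disjoint_arrows hk).notMem_of_mem_right hdT)

theorem isDegreeOneSink_and_isDegreeOneSink_iff (hFS : IsStringMatrix B K DS.entry)
    (hFT : IsStringMatrix B K DT.entry) (hk : DS.vertices ∩ DT.vertices ⊆ {k}) :
    DS.IsDegreeOneSink k ∧ DT.IsDegreeOneSink k ↔ k ∈ DS.J ∧ k ∈ DT.J :=
  ⟨And.imp And.left And.left, fun ⟨hkS, hkT⟩ => ⟨isDegreeOneSink_of_mem_right hFS hFT hk hkS hkT,
    isDegreeOneSink_of_mem_right hFT hFS (Set.inter_comm _ _ ▸ hk) hkT hkS⟩⟩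

theorem isDegreeOneSource_and_isDegreeOneSource_iff (hFS : IsStringMatrix B K DS.entry)
    (hFT : IsStringMatrix B K DT.entry) (hk : DS.vertices ∩ DT.vertices ⊆ {k}) :
    DS.IsDegreeOneSource k ∧ DT.IsDegreeOneSource k ↔ k ∈ DS.I ∧ k ∈ DT.I :=
  ⟨And.imp And.left And.left, fun ⟨hkS, hkT⟩ => ⟨isDegreeOneSource_of_mem_left hFS hFT hk hkS hkT,
    isDegreeOneSource_of_mem_left hFT hFS (Set.inter_comm _ _ ▸ hk) hkT hkS⟩⟩

end TermDecomposition

variable [HasDerivedCategory.{w} (ModuleCat.{max u v} (B.Alg K))]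

theorem homVanishes_of_not_isMarked (hS : IsIndecTwoTermPartialTilting S)
    (hT : IsIndecTwoTermPartialTilting T) (hFS : IsStringMatrix B K DS.entry)
    (hFT : IsStringMatrix B K DT.entry) (hk : DS.vertices ∩ DT.vertices = {k})
    (hkS : ¬ DS.IsMarked k) (hkT : ¬ DT.IsMarked k) : HomVanishes S T (-1) := by
  have hk_mem : k ∈ DS.vertices ∩ DT.vertices := hk ▸ Set.mem_singleton k
  obtain ⟨d, rfl, hdS, hdT⟩ := exists_mem_and_symm_mem_of_disjoint (disjoint_arrows hk.subset)
    (exists_mem_arrows_of_not_isMarked hk_mem.1 hkS)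
    (exists_mem_arrows_of_not_isMarked hk_mem.2 hkT)
  rw [homVanishes_iff_matrix hS hT DS DT]
  intro G hG _ _
  ext j i
  have hj : j.1 ∈ B.branch d.symm := mem_branch_symm_of_not_isMarked hFS hdS hkS (Or.inr j.2)
  have hi : i.1 ∈ B.branch d.symm.symm :=
    mem_branch_symm_of_not_isMarked hFT hdT (by rwa [B.src_symm]) (Or.inl i.2)
  rw [SimpleGraph.Dart.symm_symm] at hi
  exact (hG j i).eq_zero_of_mem_branch hj hi (fun h => hkS (h ▸ Or.inr j.2))
    fun h => hkT (h ▸ Or.inl i.2)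

theorem homVanishes_of_mem_right (hS : IsIndecTwoTermPartialTilting S)
    (hT : IsIndecTwoTermPartialTilting T) (hFS : IsStringMatrix B K DS.entry)
    (hFT : IsStringMatrix B K DT.entry) (hk : DS.vertices ∩ DT.vertices ⊆ {k})
    (hkS : k ∈ DS.J) (hkT : k ∈ DT.J) : HomVanishes S T (-1) := by
  obtain ⟨d, rfl, hdS, hdT⟩ :=
    exists_next_symm_mem_arrows_of_mem_right_of_mem_right hFS hFT hk hkS hkT
  have hS_branch {y : B.Edge} (hy : DS.IsMarked y) : y ∈ B.branch d.symm :=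
    mem_branch_of_mem_right hFS (by rwa [B.src_symm])
      ((disjoint_arrows hk).notMem_of_mem_right hdT) hy
  have hT_branch {y : B.Edge} (hy : DT.IsMarked y) : y ∈ B.branch d :=
    mem_branch_of_mem_right hFT hkT ((disjoint_arrows hk).notMem_of_mem_left hdS) hy
  rw [homVanishes_iff_matrix hS hT DS DT]
  intro G hG _ hGT
  ext ⟨j, hj⟩ i
  by_cases hjd : j = B.src d
  · subst hjd
    exact hFT.eq_zero_of_sum_mul_entry_eq_zero hkT (fun i hi => hT_branch (Or.inl hi)) (hG ⟨_, hj⟩)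
      (congrFun₂ hGT ⟨_, hj⟩ ⟨_, hkT⟩) i
  · exact (hG ⟨j, hj⟩ i).eq_zero_of_mem_branch (hS_branch (Or.inr hj)) (hT_branch (Or.inl i.2)) hjd
      fun h => hFT.disjoint _ i.2 (h ▸ hkT)

theorem homVanishes_of_mem_left (hS : IsIndecTwoTermPartialTilting S)
    (hT : IsIndecTwoTermPartialTilting T) (hFS : IsStringMatrix B K DS.entry)
    (hFT : IsStringMatrix B K DT.entry) (hk : DS.vertices ∩ DT.vertices ⊆ {k})
    (hkS : k ∈ DS.I) (hkT : k ∈ DT.I) : HomVanishes S T (-1) := by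
  obtain ⟨d, rfl, hdS, hdT⟩ := exists_mem_arrows_of_mem_left_of_mem_left hFT hFS
    (Set.inter_comm _ _ ▸ hk) hkT hkS
  have hS_branch {y : B.Edge} (hy : DS.IsMarked y) : y ∈ B.branch d :=
    mem_branch_of_mem_left hFS hkS ((disjoint_arrows hk).notMem_of_mem_right hdS) hy
  have hT_branch {y : B.Edge} (hy : DT.IsMarked y) : y ∈ B.branch d.symm :=
    mem_branch_of_mem_left hFT (by rwa [B.src_symm])
      ((disjoint_arrows hk).notMem_of_mem_left hdT) hy
  rw [homVanishes_iff_matrix hS hT DS DT]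
  intro G hG hSG _
  ext j ⟨i, hi⟩
  by_cases hid : i = B.src d
  · subst hid
    exact hFS.eq_zero_of_sum_entry_mul_eq_zero hkS (fun j hj => hS_branch (Or.inr hj))
      (fun j => hG j ⟨_, hi⟩) (congrFun₂ hSG ⟨_, hkS⟩ ⟨_, hi⟩) j
  · refine (hG j ⟨i, hi⟩).eq_zero_of_mem_branch (d := d.symm) ?_ (hT_branch (Or.inl hi)) ?_ ?_
    · rw [SimpleGraph.Dart.symm_symm]
      exact hS_branch (Or.inr j.2)
    · rw [B.src_symm]
      exact fun h => hFS.disjoint _ hkS (h ▸ j.2)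
    · rwa [B.src_symm]

theorem not_homVanishes_of_mem_right_of_not_isMarked (hS : IsIndecTwoTermPartialTilting S)
    (hT : IsIndecTwoTermPartialTilting T) (hFS : IsStringMatrix B K DS.entry)
    (hFT : IsStringMatrix B K DT.entry) (hk : DS.vertices ∩ DT.vertices = {k}) (hkS : k ∈ DS.J)
    (hkT : ¬ DT.IsMarked k) : ¬ HomVanishes S T (-1) := by
  have hk_mem : k ∈ DS.vertices ∩ DT.vertices := hk ▸ Set.mem_singleton k
  obtain ⟨d, hd, rfl⟩ := exists_mem_arrows_of_not_isMarked hk_mem.2 hkT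
  have hdS : B.next.symm d ∉ DS.arrows := (disjoint_arrows hk.subset).notMem_of_mem_right
    (next_symm_mem_arrows hd fun h => hkT (Or.inl h))
  obtain ⟨p, q, hpq, hpd, hl, hlt⟩ := mem_arrows_iff.1 hd
  have hdp : d ≠ p := fun h => hkT (h ▸ Or.inl hl.1)
  exact not_homVanishes_of_isPeirce hS hT DS DT (j := ⟨_, hkS⟩) (i := ⟨_, hl.1⟩)
    (isPeirce_arc hpd.symm hdp) (B.arc_ne_zero hpd.symm)
    (entry_mul_arc_eq_zero_of_notMem_arrows hFS hkS hdS hpd.symm hdp)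
    (hFT.arc_mul_entry_eq_zero_of_dist_lt hpq hpd hl hdp hlt)

theorem not_homVanishes_of_not_isMarked_of_mem_left (hS : IsIndecTwoTermPartialTilting S)
    (hT : IsIndecTwoTermPartialTilting T) (hFS : IsStringMatrix B K DS.entry)
    (hFT : IsStringMatrix B K DT.entry) (hk : DS.vertices ∩ DT.vertices = {k})
    (hkS : ¬ DS.IsMarked k) (hkT : k ∈ DT.I) : ¬ HomVanishes S T (-1) := by
  have hk_mem : k ∈ DS.vertices ∩ DT.vertices := hk ▸ Set.mem_singleton k
  obtain ⟨d, hd, rfl⟩ := exists_mem_arrows_of_not_isMarked hk_mem.1 hkS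
  have hdT : d ∉ DT.arrows := (disjoint_arrows hk.subset).notMem_of_mem_left hd
  obtain ⟨p, q, hpq, hpd, hl, hlt⟩ := mem_arrows_iff.1 hd
  have hdp : d ≠ p := fun h => hkS (h ▸ Or.inl hl.1)
  have hqd : q.fst = d.fst := hpq.symm.trans hpd
  have hne : q ≠ d := fun h => hkS (h ▸ Or.inr hl.2.1)
  exact not_homVanishes_of_isPeirce hS hT DS DT (j := ⟨_, hl.2.1⟩) (i := ⟨_, hkT⟩)
    (isPeirce_arc hqd hne) (B.arc_ne_zero hqd)
    (hFS.entry_mul_arc_eq_zero_of_dist_lt hpq hpd hl hdp hlt)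
    (arc_mul_entry_eq_zero_of_notMem_arrows hFT hkT hdT hqd hne)

theorem mem_right_of_homVanishes (hS : IsIndecTwoTermPartialTilting S)
    (hT : IsIndecTwoTermPartialTilting T) (hpS : IsPresentation S) (hpT : IsPresentation T)
    (hk : DS.vertices ∩ DT.vertices = {k}) (h : HomVanishes S T (-1)) (hkS : k ∈ DS.J) :
    k ∈ DT.J := by
  by_contra hkT
  exact not_homVanishes_of_mem_right_of_not_isMarked hS hT (isStringMatrix_entry hS hpS DS)
    (isStringMatrix_entry hT hpT DT) hk hkS
    (not_or_intro (fun hkI => not_homVanishes_of_mem hS hT hpS hpT DS DT hkS hkI h) hkT) h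

theorem mem_left_of_homVanishes (hS : IsIndecTwoTermPartialTilting S)
    (hT : IsIndecTwoTermPartialTilting T) (hpS : IsPresentation S) (hpT : IsPresentation T)
    (hk : DS.vertices ∩ DT.vertices = {k}) (h : HomVanishes S T (-1)) (hkT : k ∈ DT.I) :
    k ∈ DS.I := by
  by_contra hkS
  exact not_homVanishes_of_not_isMarked_of_mem_left hS hT (isStringMatrix_entry hS hpS DS)
    (isStringMatrix_entry hT hpT DT) hk
    (not_or_intro hkS fun hkJ => not_homVanishes_of_mem hS hT hpS hpT DS DT hkJ hkT h) hkT h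

end OneCommonVertex

theorem hom_vanishes_iff_single_vertex_intersection_general
    {K : Type u} [Field K] {V : Type v} [Finite V] (B : BrauerTree V)
    [HasDerivedCategory.{w} (ModuleCat.{max u v} (B.Alg K))]
    (Ti Tj : CochainComplex (ModuleCat.{max u v} (B.Alg K)) ℤ)
    (hi : IsIndecTwoTermPartialTilting Ti) (hj : IsIndecTwoTermPartialTilting Tj)
    (hpi : IsPresentation Ti) (hpj : IsPresentation Tj)
    (Di : TermDecomposition B K Ti) (Dj : TermDecomposition B K Tj)
    (k : B.Edge) (hk : Di.vertices ∩ Dj.vertices = {k}) :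
    (HomVanishes Ti Tj (-1) ∧ HomVanishes Tj Ti (-1)) ↔
      ((¬ Di.IsMarked k ∧ ¬ Dj.IsMarked k) ∨
        (Di.IsDegreeOneSink k ∧ Dj.IsDegreeOneSink k) ∨
        (Di.IsDegreeOneSource k ∧ Dj.IsDegreeOneSource k)) := by
  have hFi := isStringMatrix_entry hi hpi Di
  have hFj := isStringMatrix_entry hj hpj Dj
  have hk' : Dj.vertices ∩ Di.vertices = {k} := Set.inter_comm _ _ ▸ hk
  rw [TermDecomposition.isDegreeOneSink_and_isDegreeOneSink_iff hFi hFj hk.subset,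
    TermDecomposition.isDegreeOneSource_and_isDegreeOneSource_iff hFi hFj hk.subset]
  constructor
  · rintro ⟨hij, hji⟩
    have hJ : k ∈ Di.J ↔ k ∈ Dj.J := ⟨mem_right_of_homVanishes hi hj hpi hpj hk hij,
      mem_right_of_homVanishes hj hi hpj hpi hk' hji⟩
    have hI : k ∈ Di.I ↔ k ∈ Dj.I := ⟨mem_left_of_homVanishes hj hi hpj hpi hk' hji,
      mem_left_of_homVanishes hi hj hpi hpj hk hij⟩
    simp only [TermDecomposition.IsMarked]
    tauto
  · rintro (⟨hki, hkj⟩ | ⟨hki, hkj⟩ | ⟨hki, hkj⟩)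
    · exact ⟨homVanishes_of_not_isMarked hi hj hFi hFj hk hki hkj,
        homVanishes_of_not_isMarked hj hi hFj hFi hk' hkj hki⟩
    · exact ⟨homVanishes_of_mem_right hi hj hFi hFj hk.subset hki hkj,
        homVanishes_of_mem_right hj hi hFj hFi hk'.subset hkj hki⟩
    · exact ⟨homVanishes_of_mem_left hi hj hFi hFj hk.subset hki hkj,
        homVanishes_of_mem_left hj hi hFj hFi hk'.subset hkj hki⟩

theorem hom_vanishes_iff_single_vertex_intersection
    {K : Type u} [Field K] [IsAlgClosed K] {V : Type v} [Finite V] (B : BrauerTree V)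
    [HasDerivedCategory.{w} (ModuleCat.{max u v} (B.Alg K))]
    (Ti Tj : CochainComplex (ModuleCat.{max u v} (B.Alg K)) ℤ)
    (hi : IsIndecTwoTermPartialTilting Ti) (hj : IsIndecTwoTermPartialTilting Tj)
    (hpi : IsPresentation Ti) (hpj : IsPresentation Tj)
    (Di : TermDecomposition B K Ti) (Dj : TermDecomposition B K Tj)
    (k : B.Edge) (hk : Di.vertices ∩ Dj.vertices = {k}) :
    (HomVanishes Ti Tj (-1) ∧ HomVanishes Tj Ti (-1)) ↔
      ((¬ Di.IsMarked k ∧ ¬ Dj.IsMarked k) ∨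
        (Di.IsDegreeOneSink k ∧ Dj.IsDegreeOneSink k) ∨
        (Di.IsDegreeOneSource k ∧ Dj.IsDegreeOneSource k)) :=
  hom_vanishes_iff_single_vertex_intersection_general B Ti Tj hi hj hpi hpj Di Dj k hk
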